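/- arXiv:2511.12649 — 3 statements merged into one kernel-verified Lean document; each statement's English description precedes it below -/
import Mathlib

section
/- Let p, q be integers with 2 ≤ p < q and let γ ∈ (0, γ_{p,q}), with a, A the two roots of g(u) = 1 − u^{p−1} + γ u^{q−1} in (0,∞), a < A. Let N ≥ 1 and let ũ ∈ ℝ^N have every entry in {a, −a, A, −A}. Then there exist ε₀ > 0 and C₀ > 0 such that for every ε ∈ (0, ε₀) there exists a real-valued u ∈ ℓ²(ℤ) solving ε(u_{n+1} − 2u_n + u_{n−1}) − u_n + |u_n|^{p−1}u_n − γ|u_n|^{q−1}u_n = 0 for all n ∈ ℤ with ‖u − u⁽⁰⁾‖_{ℓ²(ℤ)} ≤ C₀ε, and additionally: u_n ≠ 0 for all n ∈ ℤ; the sign of u_n equals the sign of ũ_n for 1 ≤ n ≤ N; the sign of u_n equals the sign of ũ_1 for all n ≤ 0; the sign of u_n equals the sign of ũ_N for all n ≥ N + 1. In particular, the number of indices n ∈ ℤ with u_n u_{n+1} < 0 equals the number of indices n ∈ {1, …, N−1} with ũ_n ũ_{n+1} < 0. -/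
/-- The critical parameter `γ_{p,q} = ((p−1)/(q−1))·((q−p)/(q−1))^{(q−p)/(p−1)}`. -/
noncomputable def gammaCrit (p q : ℕ) : ℝ :=
  (((p : ℝ) - 1) / ((q : ℝ) - 1)) *
    (((q : ℝ) - (p : ℝ)) / ((q : ℝ) - 1)) ^ (((q : ℝ) - (p : ℝ)) / ((p : ℝ) - 1))

/-- Extension of a vector `Fin N → ℝ` to `ℕ` by zero. -/
def extFin (N : ℕ) (ut : Fin N → ℝ) : ℕ → ℝ :=
  fun i => if h : i < N then ut ⟨i, h⟩ else 0

/-- The limiting sequence `u⁽⁰⁾ : ℤ → ℝ`, equal to `ũ_n` for `1 ≤ n ≤ N` and `0` otherwise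
(1-indexed convention). -/
def limitSeq (N : ℕ) (ut : Fin N → ℝ) : ℤ → ℝ :=
  fun n => if 1 ≤ n ∧ n ≤ (N : ℤ) then extFin N ut (n - 1).toNat else 0

/-!
At `ε = 0` the sites decouple and the code `u⁽⁰⁾` solves the equation, each of its values being a
simple zero of the on-site nonlinearity: a double root of `g` would be the strict minimum of `g`
on `[0, ∞)`, which is excluded by the second root. Hence a Newton step with the derivative frozen
at `u⁽⁰⁾` contracts a tube of width `O(ε) 2^{-|n|}` around `u⁽⁰⁾` in the uniform metric. Its fixed
point inherits the signs of the code on `1, …, N`. On each tail the solution is small, so `ε Δu =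
u g(|u|)` has the sign of `u`; a change of sign would make the solution strictly monotone away
from `0` from there on, contradicting its decay.
-/

open Filter Function Metric Set Topology UniformConvergence
open scoped NNReal

theorem exists_isFixedPt_of_uniform_contraction {ι E : Type*} [MetricSpace E] [CompleteSpace E]
    {S : Set (ι → E)} (hS : IsClosed S) (hne : S.Nonempty)
    {C : ℝ} (hC : ∀ u ∈ S, ∀ v ∈ S, ∀ i, dist (u i) (v i) ≤ C)
    {T : (ι → E) → ι → E} (hT : MapsTo T S S) {r : ℝ≥0} (hr : r < 1)
    (hcontr : ∀ u ∈ S, ∀ v ∈ S, ∀ D : ℝ, (∀ i, dist (u i) (v i) ≤ D) →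
      ∀ i, dist (T u i) (T v i) ≤ r * D) :
    ∃ u ∈ S, IsFixedPt T u := by
  let S' : Set (ι →ᵤ E) := UniformFun.toFun ⁻¹' S
  let T' : (ι →ᵤ E) → ι →ᵤ E := fun u ↦ UniformFun.ofFun (T (UniformFun.toFun u))
  have edist_ne_top : ∀ u ∈ S', ∀ v ∈ S', edist u v ≠ ⊤ := fun u hu v hv ↦
    ((UniformFun.edist_le (C := ENNReal.ofReal C)).2 fun i ↦ by
      rw [edist_dist]
      exact ENNReal.ofReal_le_ofReal (hC _ hu _ hv i)).trans_lt ENNReal.ofReal_lt_top |>.ne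
  have hT' : MapsTo T' S' S' := fun u hu ↦ hT hu
  have hLip : LipschitzOnWith r T' S' := by
    refine UniformFun.lipschitzOnWith_ofFun_iff.2 fun i u hu v hv ↦ ?_
    rw [← ENNReal.ofReal_toReal (edist_ne_top u hu v hv), ← ENNReal.ofReal_coe_nnreal,
      ← ENNReal.ofReal_mul r.coe_nonneg, edist_dist]
    refine ENNReal.ofReal_le_ofReal (hcontr _ hu _ hv _ (fun j ↦ ?_) i)
    rw [dist_edist]
    exact ENNReal.toReal_mono (edist_ne_top u hu v hv) UniformFun.edist_eval_le
  obtain ⟨u₀, hu₀⟩ := hne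
  have hu₀' : UniformFun.ofFun u₀ ∈ S' := hu₀
  obtain ⟨u, hu, hfix, -⟩ := ContractingWith.exists_fixedPoint'
    (hS.preimage UniformFun.uniformContinuous_toFun.continuous).isComplete hT'
    ⟨hr, hLip.mapsToRestrict hT'⟩ hu₀' (edist_ne_top _ hu₀' _ (hT' hu₀'))
  exact ⟨UniformFun.toFun u, hu, hfix⟩

/-- The discrete Laplacian `(Δu)_n = u_{n+1} - 2 u_n + u_{n-1}` on `ℤ`. -/
def discreteLaplacian (u : ℤ → ℝ) (n : ℤ) : ℝ := u (n + 1) - 2 * u n + u (n - 1)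

theorem discreteLaplacian_sub (u v : ℤ → ℝ) (n : ℤ) :
    discreteLaplacian (fun k ↦ u k - v k) n = discreteLaplacian u n - discreteLaplacian v n := by
  simp only [discreteLaplacian]
  ring

theorem abs_discreteLaplacian_le {u : ℤ → ℝ} {n : ℤ} {b c : ℝ} (h : |u n| ≤ b)
    (hsucc : |u (n + 1)| ≤ c) (hpred : |u (n - 1)| ≤ c) :
    |discreteLaplacian u n| ≤ 2 * b + 2 * c := by
  rw [discreteLaplacian]
  rw [abs_le] at h hsucc hpred ⊢
  constructor <;> linarith

/-- The weight `2^{-|n|}` on `ℤ` measuring the spatial decay of the modes. -/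
noncomputable def decayWeight (n : ℤ) : ℝ := (1 / 2) ^ n.natAbs

theorem decayWeight_pos (n : ℤ) : 0 < decayWeight n := by
  unfold decayWeight
  positivity

theorem decayWeight_le_one (n : ℤ) : decayWeight n ≤ 1 :=
  pow_le_one₀ (by norm_num) (by norm_num)

theorem decayWeight_le_two_mul {m n : ℤ} (h : n.natAbs ≤ m.natAbs + 1) :
    decayWeight m ≤ 2 * decayWeight n := by
  have : ((1 : ℝ) / 2) ^ (m.natAbs + 1) ≤ (1 / 2) ^ n.natAbs :=
    pow_le_pow_of_le_one (by norm_num) (by norm_num) h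
  rw [pow_succ] at this
  unfold decayWeight
  linarith

theorem summable_decayWeight : Summable decayWeight := by
  have h := summable_geometric_of_lt_one (r := (1 : ℝ) / 2) (by norm_num) (by norm_num)
  exact .of_nat_of_neg (by simpa [decayWeight] using h) (by simpa [decayWeight] using h)

theorem summable_decayWeight_sq : Summable fun n ↦ decayWeight n ^ 2 :=
  summable_decayWeight.of_nonneg_of_le (fun _ ↦ sq_nonneg _) fun n ↦
    pow_le_of_le_one (decayWeight_pos n).le (decayWeight_le_one n) two_ne_zero

theorem exists_abs_le_mul_of_finite_support {ι : Type*} {u w : ι → ℝ} (hu : u.support.Finite)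
    (hw : ∀ i, 0 < w i) : ∃ B > 0, ∀ i, |u i| ≤ B * w i := by
  have hfin : (range fun i ↦ |u i| / w i).Finite :=
    (hu.image fun i ↦ |u i| / w i).insert 0 |>.subset <|
      (range_subset_insert_image_support _).trans <|
        insert_subset_insert <| image_mono fun i hi h ↦ hi (by simp [h])
  obtain ⟨B, hB⟩ := hfin.bddAbove
  refine ⟨max B 1, by positivity, fun i ↦ ?_⟩
  rw [← div_le_iff₀ (hw i)]
  exact (hB (mem_range_self i)).trans (le_max_left _ _)

section Summability

variable {ι : Type*} {v w : ι → ℝ} {c : ℝ}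

theorem sq_le_of_abs_le_mul (h : ∀ i, |v i| ≤ c * w i) (i : ι) :
    v i ^ 2 ≤ c ^ 2 * w i ^ 2 := by
  rw [← mul_pow, ← sq_abs]
  exact pow_le_pow_left₀ (abs_nonneg _) (h i) 2

theorem summable_sq_of_abs_le_mul (hw : Summable fun i ↦ w i ^ 2) (h : ∀ i, |v i| ≤ c * w i) :
    Summable fun i ↦ v i ^ 2 :=
  (hw.mul_left (c ^ 2)).of_nonneg_of_le (fun _ ↦ sq_nonneg _) (sq_le_of_abs_le_mul h)

theorem sqrt_tsum_sq_le_of_abs_le_mul (hc : 0 ≤ c) (hw : Summable fun i ↦ w i ^ 2)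
    (h : ∀ i, |v i| ≤ c * w i) : √(∑' i, v i ^ 2) ≤ c * √(∑' i, w i ^ 2) := by
  calc √(∑' i, v i ^ 2) ≤ √(∑' i, c ^ 2 * w i ^ 2) := Real.sqrt_le_sqrt <|
        (summable_sq_of_abs_le_mul hw h).tsum_le_tsum (sq_le_of_abs_le_mul h) (hw.mul_left _)
    _ = c * √(∑' i, w i ^ 2) := by
        rw [tsum_mul_left, Real.sqrt_mul (sq_nonneg c), Real.sqrt_sq hc]

end Summability
section SimpleZero

variable {𝕜 : Type*} [NontriviallyNormedField 𝕜] {f : 𝕜 → 𝕜}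

/-- A simple zero of `f`: one at which `f` is strictly differentiable with nonzero derivative. -/
def IsSimpleZero (f : 𝕜 → 𝕜) (v : 𝕜) : Prop :=
  f v = 0 ∧ ∃ d ≠ 0, HasStrictDerivAt f d v

theorem IsSimpleZero.exists_newton_lipschitzOnWith {v : 𝕜} (h : IsSimpleZero f v) :
    ∃ θ ≠ 0, ∀ᶠ δ in 𝓝[>] (0 : ℝ),
      LipschitzOnWith (1 / 2) (fun x ↦ x - θ * f x) (closedBall v δ) := by
  obtain ⟨-, d, hd, hder⟩ := h
  have hnewton : HasStrictDerivAt (fun x ↦ x - d⁻¹ * f x) 0 v :=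
    ((hasStrictDerivAt_id v).sub (hder.const_mul d⁻¹)).congr_deriv (by
      rw [inv_mul_cancel₀ hd, sub_self])
  obtain ⟨s, hs, hLip⟩ := hnewton.hasStrictFDerivAt.exists_lipschitzOnWith_of_nnnorm_lt (1 / 2)
    (by simp)
  have hball : ∀ᶠ δ in 𝓝 (0 : ℝ), closedBall v δ ⊆ s := eventually_closedBall_subset hs
  exact ⟨d⁻¹, inv_ne_zero hd, (hball.filter_mono nhdsWithin_le_nhds).mono fun δ ↦ hLip.mono⟩

theorem exists_uniform_newton_lipschitzOnWith {ι : Type*} {v : ι → 𝕜}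
    (hv : ∀ i, IsSimpleZero f (v i)) (hfin : (range v).Finite) :
    ∃ δ > (0 : ℝ), ∃ Θ > (0 : ℝ), ∃ θ : ι → 𝕜, ∀ i, θ i ≠ 0 ∧ ‖θ i‖ ≤ Θ ∧
      LipschitzOnWith (1 / 2) (fun x ↦ x - θ i * f x) (closedBall (v i) δ) := by
  have hv' : ∀ x ∈ range v, IsSimpleZero f x := forall_mem_range.2 hv
  choose! θ hθ hLip using fun x hx ↦ (hv' x hx).exists_newton_lipschitzOnWith
  obtain ⟨δ, hδLip, hδ⟩ := (((eventually_all_finite hfin).2 hLip).and self_mem_nhdsWithin).exists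
  obtain ⟨Θ, hθΘ, hΘ⟩ := (((eventually_all_finite hfin).2 fun x _ ↦
    eventually_ge_atTop ‖θ x‖).and (eventually_gt_atTop 0)).exists
  exact ⟨δ, hδ, Θ, hΘ, θ ∘ v, fun i ↦ have hi := mem_range_self i
    ⟨hθ _ hi, hθΘ _ hi, hδLip _ hi⟩⟩

end SimpleZero

/-- The map `u ↦ u - θ (f(u) - ε Δu)`, a Newton step with frozen inverse derivatives `θ_n ≠ 0`
at each site, whose fixed points solve `ε Δu = f(u)`. -/
def newtonStep (f : ℝ → ℝ) (θ : ℤ → ℝ) (ε : ℝ) (u : ℤ → ℝ) (n : ℤ) : ℝ :=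
  u n - θ n * (f (u n) - ε * discreteLaplacian u n)

/-- The sequences within `ρ 2^{-|n|}` of `u₀`, on which the Newton step is iterated. -/
def decayTube (u₀ : ℤ → ℝ) (ρ : ℝ) : Set (ℤ → ℝ) :=
  {u | ∀ n, |u n - u₀ n| ≤ ρ * decayWeight n}

section Continuation

variable {f : ℝ → ℝ} {θ u₀ u v : ℤ → ℝ} {ε δ ρ Θ B D : ℝ}

theorem isClosed_decayTube : IsClosed (decayTube u₀ ρ) := by
  simp only [decayTube, ofPred_forall]
  exact isClosed_iInter fun n ↦ isClosed_le (by fun_prop) continuous_const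

theorem self_mem_decayTube (hρ : 0 ≤ ρ) : u₀ ∈ decayTube u₀ ρ := fun n ↦ by
  rw [sub_self, abs_zero]
  exact mul_nonneg hρ (decayWeight_pos n).le

theorem abs_sub_le_of_mem_decayTube (hρ : 0 ≤ ρ) (hu : u ∈ decayTube u₀ ρ) (n : ℤ) :
    |u n - u₀ n| ≤ ρ :=
  (hu n).trans (mul_le_of_le_one_right hρ (decayWeight_le_one n))

theorem exists_abs_le_mul_decayWeight_of_mem_decayTube (hsupp : u₀.support.Finite)
    (hu : u ∈ decayTube u₀ ρ) : ∃ C, ∀ n, |u n| ≤ C * decayWeight n := by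
  obtain ⟨B, -, hB⟩ := exists_abs_le_mul_of_finite_support hsupp decayWeight_pos
  exact ⟨ρ + B, fun n ↦ by linarith [hu n, hB n, abs_sub_abs_le_abs_sub (u n) (u₀ n)]⟩

theorem summable_sq_of_mem_decayTube (hsupp : u₀.support.Finite) (hu : u ∈ decayTube u₀ ρ) :
    Summable fun n ↦ u n ^ 2 :=
  have ⟨_, hC⟩ := exists_abs_le_mul_decayWeight_of_mem_decayTube hsupp hu
  summable_sq_of_abs_le_mul summable_decayWeight_sq hC

theorem tendsto_cofinite_zero_of_mem_decayTube (hsupp : u₀.support.Finite)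
    (hu : u ∈ decayTube u₀ ρ) : Tendsto u cofinite (𝓝 0) :=
  have ⟨C, hC⟩ := exists_abs_le_mul_decayWeight_of_mem_decayTube hsupp hu
  (Summable.of_norm_bounded (summable_decayWeight.mul_left C) hC).tendsto_cofinite_zero

theorem abs_discreteLaplacian_le_mul_decayWeight (hB : 0 ≤ B)
    (h : ∀ n, |u n| ≤ B * decayWeight n) (n : ℤ) :
    |discreteLaplacian u n| ≤ 6 * B * decayWeight n := by
  have hnear : ∀ k : ℤ, n.natAbs ≤ k.natAbs + 1 → |u k| ≤ B * (2 * decayWeight n) := fun k hk ↦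
    (h k).trans (mul_le_mul_of_nonneg_left (decayWeight_le_two_mul hk) hB)
  linarith [abs_discreteLaplacian_le (h n) (hnear (n + 1) (by omega)) (hnear (n - 1) (by omega))]

theorem eq_of_isFixedPt_newtonStep (hθ : ∀ n, θ n ≠ 0) (h : IsFixedPt (newtonStep f θ ε) u)
    (n : ℤ) : ε * discreteLaplacian u n = f (u n) := by
  have hn : u n - θ n * (f (u n) - ε * discreteLaplacian u n) = u n := congrFun h n
  have hzero := (mul_eq_zero.1 (sub_eq_self.1 hn)).resolve_left (hθ n)
  linarith

theorem abs_newtonStep_sub_newtonStep_le {s : Set ℝ} {n : ℤ}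
    (hLip : LipschitzOnWith (1 / 2) (fun x ↦ x - θ n * f x) s) (hθ : |θ n| ≤ Θ)
    (hu : u n ∈ s) (hv : v n ∈ s) :
    |newtonStep f θ ε u n - newtonStep f θ ε v n| ≤
      1 / 2 * |u n - v n| + Θ * |ε| * |discreteLaplacian (fun k ↦ u k - v k) n| := by
  have hsplit : newtonStep f θ ε u n - newtonStep f θ ε v n =
      ((u n - θ n * f (u n)) - (v n - θ n * f (v n))) +
        θ n * ε * discreteLaplacian (fun k ↦ u k - v k) n := by
    rw [discreteLaplacian_sub]
    simp only [newtonStep]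
    ring
  have hsite : |(u n - θ n * f (u n)) - (v n - θ n * f (v n))| ≤ 1 / 2 * |u n - v n| := by
    exact_mod_cast hLip.dist_le_mul _ hu _ hv
  rw [hsplit]
  refine (abs_add_le _ _).trans (add_le_add hsite ?_)
  rw [abs_mul, abs_mul]
  gcongr

theorem mapsTo_newtonStep_decayTube (hf : ∀ n, f (u₀ n) = 0) (hθ : ∀ n, |θ n| ≤ Θ)
    (hLip : ∀ n, LipschitzOnWith (1 / 2) (fun x ↦ x - θ n * f x) (closedBall (u₀ n) δ))
    (hB : 0 ≤ B) (hu₀ : ∀ n, |u₀ n| ≤ B * decayWeight n) (hρ : 0 ≤ ρ) (hρδ : ρ ≤ δ)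
    (hε : 24 * Θ * |ε| ≤ 1) (hερ : 24 * Θ * |ε| * B ≤ ρ) :
    MapsTo (newtonStep f θ ε) (decayTube u₀ ρ) (decayTube u₀ ρ) := by
  intro u hu n
  have hw := decayWeight_pos n
  have hstep := abs_newtonStep_sub_newtonStep_le (ε := ε) (hLip n) (hθ n)
    (mem_closedBall.2 ((abs_sub_le_of_mem_decayTube hρ hu n).trans hρδ))
    (mem_closedBall_self (hρ.trans hρδ))
  have hlap := abs_discreteLaplacian_le_mul_decayWeight hρ hu n
  have hlap₀ := abs_discreteLaplacian_le_mul_decayWeight hB hu₀ n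
  have hΘ : 0 ≤ Θ * |ε| := mul_nonneg ((abs_nonneg _).trans (hθ n)) (abs_nonneg _)
  have hdefect : |newtonStep f θ ε u₀ n - u₀ n| ≤ Θ * |ε| * (6 * B * decayWeight n) := by
    have : newtonStep f θ ε u₀ n - u₀ n = θ n * ε * discreteLaplacian u₀ n := by
      simp only [newtonStep, hf]
      ring
    rw [this, abs_mul, abs_mul]
    have := hθ n
    gcongr
  calc |newtonStep f θ ε u n - u₀ n|
      ≤ |newtonStep f θ ε u n - newtonStep f θ ε u₀ n| + |newtonStep f θ ε u₀ n - u₀ n| :=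
        abs_sub_le _ _ _
    _ ≤ (1 / 2 * (ρ * decayWeight n) + Θ * |ε| * (6 * ρ * decayWeight n)) +
          Θ * |ε| * (6 * B * decayWeight n) := by
        refine add_le_add (hstep.trans ?_) hdefect
        gcongr
        exact hu n
    _ = (2 * ρ + 24 * Θ * |ε| * ρ + 24 * Θ * |ε| * B) * decayWeight n / 4 := by ring
    _ ≤ (2 * ρ + 1 * ρ + ρ) * decayWeight n / 4 := by gcongr
    _ = ρ * decayWeight n := by ring

theorem abs_newtonStep_sub_newtonStep_le_two_thirds_mul (hθ : ∀ n, |θ n| ≤ Θ)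
    (hLip : ∀ n, LipschitzOnWith (1 / 2) (fun x ↦ x - θ n * f x) (closedBall (u₀ n) δ))
    (hu : ∀ n, |u n - u₀ n| ≤ δ) (hv : ∀ n, |v n - u₀ n| ≤ δ)
    (hε : 24 * Θ * |ε| ≤ 1) (huv : ∀ n, |u n - v n| ≤ D) (n : ℤ) :
    |newtonStep f θ ε u n - newtonStep f θ ε v n| ≤ 2 / 3 * D := by
  have hD : 0 ≤ D := (abs_nonneg _).trans (huv n)
  have hΘ : 0 ≤ Θ := (abs_nonneg _).trans (hθ n)
  calc |newtonStep f θ ε u n - newtonStep f θ ε v n|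
      ≤ 1 / 2 * |u n - v n| + Θ * |ε| * |discreteLaplacian (fun k ↦ u k - v k) n| :=
        abs_newtonStep_sub_newtonStep_le (hLip n) (hθ n) (hu n) (hv n)
    _ ≤ 1 / 2 * D + Θ * |ε| * (2 * D + 2 * D) := by
        gcongr
        exacts [huv n, abs_discreteLaplacian_le (huv n) (huv _) (huv _)]
    _ = 1 / 2 * D + 24 * Θ * |ε| * D / 6 := by ring
    _ ≤ 1 / 2 * D + 1 * D / 6 := by gcongr
    _ = 2 / 3 * D := by ring

theorem exists_solution_near_of_isSimpleZero (hf : ∀ n, IsSimpleZero f (u₀ n))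
    (hsupp : u₀.support.Finite) :
    ∃ ε₀ > 0, ∃ K > 0, ∀ ε, |ε| < ε₀ → ∃ u : ℤ → ℝ,
      (∀ n, ε * discreteLaplacian u n = f (u n)) ∧ u ∈ decayTube u₀ (K * |ε|) := by
  have hfin : (range u₀).Finite :=
    ((hsupp.image u₀).insert 0).subset (range_subset_insert_image_support u₀)
  obtain ⟨δ, hδ, Θ, hΘ, θ, hθ⟩ := exists_uniform_newton_lipschitzOnWith hf hfin
  choose hθ₀ hθΘ hLip using hθ
  obtain ⟨B, hB, hu₀⟩ := exists_abs_le_mul_of_finite_support hsupp decayWeight_pos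
  refine ⟨min (1 / (24 * Θ)) (δ / (24 * Θ * B)), by positivity, 24 * Θ * B, by positivity,
    fun ε hε ↦ ?_⟩
  obtain ⟨hεΘ, hεδ⟩ := lt_min_iff.1 hε
  rw [lt_div_iff₀' (by positivity)] at hεΘ hεδ
  set ρ := 24 * Θ * B * |ε|
  have hρ : 0 ≤ ρ := by positivity
  have htube : ∀ u ∈ decayTube u₀ ρ, ∀ n, |u n - u₀ n| ≤ δ := fun u hu n ↦
    (abs_sub_le_of_mem_decayTube hρ hu n).trans hεδ.le
  obtain ⟨u, hu, hfix⟩ := exists_isFixedPt_of_uniform_contraction (r := 2 / 3) (C := δ + δ)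
    isClosed_decayTube ⟨u₀, self_mem_decayTube hρ⟩
    (fun u hu v hv n ↦ (dist_triangle_right _ _ (u₀ n)).trans
      (add_le_add (htube u hu n) (htube v hv n)))
    (mapsTo_newtonStep_decayTube (fun n ↦ (hf n).1) hθΘ hLip hB.le hu₀ hρ hεδ.le hεΘ.le
      (mul_right_comm _ _ _).le)
    (by rw [← NNReal.coe_lt_coe]; norm_num)
    (fun u hu v hv D huv ↦ by
      simpa using! abs_newtonStep_sub_newtonStep_le_two_thirds_mul hθΘ hLip (htube u hu)
        (htube v hv) hεΘ.le huv)
  exact ⟨u, eq_of_isFixedPt_newtonStep hθ₀ hfix, hu⟩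

end Continuation

/-- The profile `g(u) = 1 - u^m + γ u^n` of the competing powers, with `m = p - 1` and
`n = q - 1`. -/
def profile (m n : ℕ) (γ u : ℝ) : ℝ := 1 - u ^ m + γ * u ^ n

/-- The on-site nonlinearity `x g(|x|) = x - |x|^{p-1} x + γ |x|^{q-1} x`, for which the stationary
equation reads `ε Δu = onsite u`. -/
def onsite (m n : ℕ) (γ x : ℝ) : ℝ := x * profile m n γ |x|

section Nonlinearity

variable {m n : ℕ} {γ : ℝ}

-- Strict Bernoulli inequality for `t ^ m` and the exponent `n / m`.
theorem mul_pow_lt_mul_pow_add_sub (hm : 0 < m) (hmn : m < n) {t : ℝ} (ht : 0 ≤ t) (ht1 : t ≠ 1) :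
    n * t ^ m < m * t ^ n + (n - m) := by
  have hm' : (0 : ℝ) < m := by exact_mod_cast hm
  have hexp : 1 < (n : ℝ) / m := (one_lt_div hm').2 (by exact_mod_cast hmn)
  have hbern := one_add_mul_self_lt_rpow_one_add (s := t ^ m - 1) (by linarith [pow_nonneg ht m])
    (sub_ne_zero.2 fun h ↦ ht1 ((pow_eq_one_iff_of_nonneg ht hm.ne').1 h)) hexp
  have hpow : (1 + (t ^ m - 1)) ^ ((n : ℝ) / m) = t ^ n := by
    rw [add_sub_cancel, ← Real.rpow_natCast t m, ← Real.rpow_mul ht, mul_div_cancel₀ _ hm'.ne',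
      Real.rpow_natCast]
  rw [hpow, div_mul_eq_mul_div, ← lt_sub_iff_add_lt', div_lt_iff₀ hm'] at hbern
  linarith

theorem profile_lt_of_critical (hm : 0 < m) (hmn : m < n) {x y : ℝ} (hx : 0 < x) (hy : 0 ≤ y)
    (hxy : x ≠ y) (hcrit : γ * (n * x ^ n) = m * x ^ m) : profile m n γ x < profile m n γ y := by
  obtain ⟨t, rfl⟩ : ∃ t, y = x * t := ⟨y / x, (mul_div_cancel₀ y hx.ne').symm⟩
  have hn : (0 : ℝ) < n := by exact_mod_cast hm.trans hmn
  have hbern := mul_pow_lt_mul_pow_add_sub hm hmn (nonneg_of_mul_nonneg_right hy hx)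
    fun h ↦ hxy (by rw [h, mul_one])
  refine lt_of_mul_lt_mul_left ?_ hn.le
  calc n * profile m n γ x = n - (n - m) * x ^ m := by
        unfold profile
        linear_combination hcrit
    _ < n - (n * t ^ m - m * t ^ n) * x ^ m := by
        exact sub_lt_sub_left (mul_lt_mul_of_pos_right (by linarith) (pow_pos hx m)) _
    _ = n * profile m n γ (x * t) := by
        simp only [profile, mul_pow]
        linear_combination -t ^ n * hcrit

theorem hasDerivAt_abs_pow_mul_self (m : ℕ) (x : ℝ) :
    HasDerivAt (fun y : ℝ ↦ |y| ^ m * y) ((m + 1) * |x| ^ m) x := by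
  refine hasDerivAt_of_hasDerivAt_of_ne' (x := 0) (g := fun y ↦ (m + 1) * |y| ^ m)
    (fun y hy ↦ ?_) (by fun_prop) (by fun_prop) x
  refine (((hasDerivAt_abs hy).pow m).mul (hasDerivAt_id y)).congr_deriv ?_
  rcases m with - | m
  · simp
  · have : (SignType.sign y : ℝ) * y = |y| := sign_mul_self y
    simp only [Nat.add_sub_cancel, Pi.pow_apply, id, Nat.cast_add, Nat.cast_one]
    linear_combination ((m : ℝ) + 1) * |y| ^ m * this

theorem hasStrictDerivAt_onsite (m n : ℕ) (γ x : ℝ) :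
    HasStrictDerivAt (onsite m n γ) (1 - (m + 1) * |x| ^ m + γ * ((n + 1) * |x| ^ n)) x := by
  refine hasStrictDerivAt_of_hasDerivAt_of_continuousAt
    (f' := fun y ↦ 1 - (m + 1) * |y| ^ m + γ * ((n + 1) * |y| ^ n))
    (.of_forall fun y ↦ ?_) (by fun_prop)
  have h := ((hasDerivAt_id y).sub (hasDerivAt_abs_pow_mul_self m y)).add
    ((hasDerivAt_abs_pow_mul_self n y).const_mul γ)
  convert! h using 1
  ext z
  simp only [onsite, profile, Pi.add_apply, Pi.sub_apply, id]
  ring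

theorem isSimpleZero_onsite_zero (hm : m ≠ 0) (hn : n ≠ 0) : IsSimpleZero (onsite m n γ) 0 :=
  ⟨zero_mul _, _, by simp [hm, hn], hasStrictDerivAt_onsite m n γ 0⟩

-- A double root of the profile would be its only positive root.
theorem isSimpleZero_onsite_of_profile_eq_zero (hm : 0 < m) (hmn : m < n) {v y : ℝ} (hv : v ≠ 0)
    (hy : 0 ≤ y) (hvy : |v| ≠ y) (hgv : profile m n γ |v| = 0) (hgy : profile m n γ y = 0) :
    IsSimpleZero (onsite m n γ) v := by
  refine ⟨by rw [onsite, hgv, mul_zero], _, fun hder ↦ ?_, hasStrictDerivAt_onsite m n γ v⟩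
  have hcrit : γ * (n * |v| ^ n) = m * |v| ^ m := by
    unfold profile at hgv
    linear_combination hder - hgv
  exact (profile_lt_of_critical hm hmn (abs_pos.2 hv) hy hvy hcrit).ne (hgv.trans hgy.symm)

theorem onsite_mul_nonpos (hγ : 0 ≤ γ) {x s : ℝ} (hx : |x| ≤ 1) (hxs : x * s ≤ 0) :
    onsite m n γ x * s ≤ 0 := by
  have hpow : |x| ^ m ≤ 1 := pow_le_one₀ (abs_nonneg x) hx
  have hg : 0 ≤ profile m n γ |x| := by
    have : 0 ≤ γ * |x| ^ n := by positivity
    unfold profile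
    linarith
  calc onsite m n γ x * s = profile m n γ |x| * (x * s) := by
        unfold onsite
        ring
    _ ≤ 0 := mul_nonpos_of_nonneg_of_nonpos hg hxs

end Nonlinearity

section Signs

variable {R : Type*} [CommRing R] [LinearOrder R] [IsStrictOrderedRing R]

theorem mul_pos_of_abs_sub_lt_abs {x y : R} (h : |x - y| < |y|) : 0 < x * y := by
  nlinarith [sq_lt_sq.2 h, sq_nonneg x]

theorem sign_eq_of_mul_pos {x y : ℝ} (h : 0 < x * y) : Real.sign x = Real.sign y := by
  rcases pos_and_pos_or_neg_and_neg_of_mul_pos h with ⟨hx, hy⟩ | ⟨hx, hy⟩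
  · rw [Real.sign_of_pos hx, Real.sign_of_pos hy]
  · rw [Real.sign_of_neg hx, Real.sign_of_neg hy]

theorem mul_neg_iff_of_mul_pos {x x' y y' : R} (h : 0 < x * y) (h' : 0 < x' * y') :
    x * x' < 0 ↔ y * y' < 0 := by
  have hprod : 0 < (x * x') * (y * y') := by linarith [mul_pos h h', mul_mul_mul_comm x y x' y']
  exact ⟨fun hx ↦ neg_of_mul_pos_right hprod hx.le, fun hy ↦ neg_of_mul_pos_left hprod hy.le⟩

-- Once nonpositive, the sequence would decrease strictly forever and could not return to `0`.
theorem pos_of_tendsto_zero_of_concave {v : ℕ → ℝ} (h₀ : 0 < v 0) (hlim : Tendsto v atTop (𝓝 0))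
    (hconc : ∀ j, v (j + 1) ≤ 0 → v (j + 2) - 2 * v (j + 1) + v j ≤ 0) (j : ℕ) : 0 < v j := by
  induction j with
  | zero => exact h₀
  | succ j ih =>
    by_contra! hj
    have hdec : ∀ i, v (j + i + 1) ≤ 0 ∧ v (j + i + 1) < v (j + i) := fun i ↦ by
      induction i with
      | zero => exact ⟨hj, hj.trans_lt ih⟩
      | succ i ih =>
        have hlt : v (j + i + 2) < v (j + i + 1) := by linarith [hconc (j + i) ih.1, ih.2]
        exact ⟨hlt.le.trans ih.1, hlt⟩
    have hanti : Antitone fun i ↦ v (j + i + 2) :=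
      antitone_nat_of_succ_le fun i ↦ (hdec (i + 2)).2.le
    have hlim' : Tendsto (fun i ↦ v (j + i + 2)) atTop (𝓝 0) :=
      hlim.comp (tendsto_atTop_mono (fun i ↦ (by omega : i ≤ j + i + 2)) tendsto_id)
    linarith [hanti.le_of_tendsto hlim' 0, (hdec 0).1, (hdec 1).2]

theorem mul_pos_of_tail_equation {m n : ℕ} {γ ε s : ℝ} (hγ : 0 ≤ γ) (hε : 0 < ε) {v : ℕ → ℝ}
    (h₀ : 0 < v 0 * s) (hlim : Tendsto v atTop (𝓝 0)) (hv : ∀ j, |v (j + 1)| ≤ 1)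
    (heq : ∀ j, ε * (v (j + 2) - 2 * v (j + 1) + v j) = onsite m n γ (v (j + 1))) (j : ℕ) :
    0 < v j * s := by
  refine pos_of_tendsto_zero_of_concave (v := fun j ↦ v j * s) h₀ (by simpa using hlim.mul_const s)
    (fun j hj ↦ ?_) j
  refine nonpos_of_mul_nonpos_right (a := ε) ?_ hε
  calc ε * (v (j + 2) * s - 2 * (v (j + 1) * s) + v j * s) = onsite m n γ (v (j + 1)) * s := by
        rw [← heq]
        ring
    _ ≤ 0 := onsite_mul_nonpos hγ (hv j) hj

end Signs

/-- The extension of a code `ũ` to `ℤ` by its end values, in the indexing `ũ_1, …, ũ_N` of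
`limitSeq`; it carries the signs of the intrinsic localized mode. -/
def constExtension (N : ℕ) (ut : Fin N → ℝ) (n : ℤ) : ℝ :=
  extFin N ut (min (n - 1).toNat (N - 1))

section Code

variable {N : ℕ} {ut : Fin N → ℝ}

theorem limitSeq_eq_zero {n : ℤ} (hn : ¬(1 ≤ n ∧ n ≤ (N : ℤ))) : limitSeq N ut n = 0 :=
  if_neg hn

theorem limitSeq_mem_range {n : ℤ} (hn : 1 ≤ n ∧ n ≤ (N : ℤ)) : limitSeq N ut n ∈ range ut := by
  have hlt : (n - 1).toNat < N := by omega
  rw [limitSeq, if_pos hn, extFin, dif_pos hlt]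
  exact mem_range_self _

theorem finite_support_limitSeq : (limitSeq N ut).support.Finite :=
  (finite_Icc 1 (N : ℤ)).subset fun _ hn ↦ not_not.1 fun h ↦ hn (limitSeq_eq_zero h)

theorem constExtension_of_le {n : ℤ} (hn : n ≤ N) :
    constExtension N ut n = extFin N ut (n - 1).toNat := by
  rw [constExtension, min_eq_left (by omega)]

theorem constExtension_eq_limitSeq {n : ℤ} (hn : 1 ≤ n ∧ n ≤ (N : ℤ)) :
    constExtension N ut n = limitSeq N ut n := by
  rw [constExtension_of_le hn.2, limitSeq, if_pos hn]

theorem constExtension_of_le_one {n : ℤ} (hn : n ≤ 1) :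
    constExtension N ut n = extFin N ut 0 := by
  rw [constExtension, Int.toNat_of_nonpos (by omega), Nat.zero_min]

theorem constExtension_of_ge {n : ℤ} (hn : (N : ℤ) ≤ n) :
    constExtension N ut n = extFin N ut (N - 1) := by
  rw [constExtension, min_eq_right (by omega)]

theorem constExtension_natCast_add_one {i : ℕ} (hi : i < N) :
    constExtension N ut (i + 1) = extFin N ut i := by
  rw [constExtension_of_le (by omega), add_sub_cancel_right, Int.toNat_natCast]

theorem setOf_constExtension_mul_neg :
    {n : ℤ | constExtension N ut n * constExtension N ut (n + 1) < 0} =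
      (fun i : ℕ ↦ (i : ℤ) + 1) ''
        ↑((Finset.range (N - 1)).filter fun i ↦ extFin N ut i * extFin N ut (i + 1) < 0) := by
  have hval : ∀ i : ℕ, i < N - 1 →
      constExtension N ut (i + 1) * constExtension N ut (i + 1 + 1) =
        extFin N ut i * extFin N ut (i + 1) := fun i hi ↦ by
    rw [constExtension_natCast_add_one (by omega), ← Nat.cast_succ,
      constExtension_natCast_add_one (by omega)]
  ext n
  simp only [mem_ofPred_eq, mem_image, Finset.coe_filter, Finset.mem_range]
  constructor
  · intro hneg
    obtain hn | hn | hn : n ≤ 0 ∨ (N : ℤ) ≤ n ∨ 1 ≤ n ∧ n < N := by omega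
    · rw [constExtension_of_le_one (by omega), constExtension_of_le_one (by omega)] at hneg
      exact absurd hneg (mul_self_nonneg _).not_gt
    · rw [constExtension_of_ge hn, constExtension_of_ge (by omega)] at hneg
      exact absurd hneg (mul_self_nonneg _).not_gt
    · lift n - 1 to ℕ using (by omega) with i hi
      obtain rfl : n = i + 1 := by omega
      have hiN : i < N - 1 := by omega
      exact ⟨i, ⟨hiN, hval i hiN ▸ hneg⟩, rfl⟩
  · rintro ⟨i, ⟨hi, hneg⟩, rfl⟩
    rwa [hval i hi]

theorem card_mul_neg_of_mul_constExtension_pos {u : ℤ → ℝ}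
    (hu : ∀ n, 0 < u n * constExtension N ut n) :
    Nat.card {n : ℤ | u n * u (n + 1) < 0} =
      ((Finset.range (N - 1)).filter fun i ↦ extFin N ut i * extFin N ut (i + 1) < 0).card := by
  simp only [mul_neg_iff_of_mul_pos (hu _) (hu _), setOf_constExtension_mul_neg]
  rw [Nat.card_image_of_injective fun i j hij ↦ by simpa using hij]
  exact Nat.card_eq_finsetCard _

-- Closeness to the code fixes the signs on `1, …, N`; they propagate along the two tails.
theorem mul_constExtension_pos {m n : ℕ} {γ ε r : ℝ} (hγ : 0 ≤ γ) (hε : 0 < ε) (hr : r ≤ 1)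
    (hN : 1 ≤ N) (hut : ∀ i, r ≤ |ut i|) {u : ℤ → ℝ}
    (heq : ∀ k, ε * discreteLaplacian u k = onsite m n γ (u k))
    (hclose : ∀ k, |u k - limitSeq N ut k| < r) (hlim : Tendsto u cofinite (𝓝 0)) (k : ℤ) :
    0 < u k * constExtension N ut k := by
  have hcore : ∀ k : ℤ, 1 ≤ k ∧ k ≤ N → 0 < u k * constExtension N ut k := fun k hk ↦ by
    obtain ⟨i, hi⟩ := limitSeq_mem_range (ut := ut) hk
    rw [constExtension_eq_limitSeq hk]
    exact mul_pos_of_abs_sub_lt_abs ((hclose k).trans_le (hi ▸ hut i))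
  have hsmall : ∀ k : ℤ, ¬(1 ≤ k ∧ k ≤ N) → |u k| ≤ 1 := fun k hk ↦ by
    simpa [limitSeq_eq_zero hk] using (hclose k).le.trans hr
  have htail : ∀ φ : ℕ → ℤ, Injective φ → Tendsto (fun j ↦ u (φ j)) atTop (𝓝 0) := fun φ hφ ↦
    hlim.comp (Nat.cofinite_eq_atTop ▸ hφ.tendsto_cofinite)
  obtain hk | hk | hk : k ≤ 0 ∨ (N : ℤ) < k ∨ 1 ≤ k ∧ k ≤ N := by omega
  · lift 1 - k to ℕ using (by omega) with j hj
    obtain rfl : k = 1 - j := by omega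
    rw [constExtension_of_le_one (by omega), ← constExtension_of_le_one le_rfl]
    refine mul_pos_of_tail_equation (m := m) (n := n) (v := fun j : ℕ ↦ u (1 - j)) hγ hε
      (by simpa using hcore 1 (by omega)) (htail _ fun i j h ↦ by simpa using h)
      (fun j ↦ hsmall _ (by omega)) (fun j ↦ ?_) j
    rw [← heq, discreteLaplacian]
    push_cast
    ring_nf
  · lift k - N to ℕ using (by omega) with j hj
    obtain rfl : k = N + j := by omega
    rw [constExtension_of_ge (by omega), ← constExtension_of_ge le_rfl]
    refine mul_pos_of_tail_equation (m := m) (n := n) (v := fun j : ℕ ↦ u (N + j)) hγ hε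
      (by simpa using hcore N (by omega)) (htail _ fun i j h ↦ by simpa using h)
      (fun j ↦ hsmall _ (by omega)) (fun j ↦ ?_) j
    rw [← heq, discreteLaplacian]
    push_cast
    ring_nf
  · exact hcore k hk

end Code

section Existence

variable {m n N : ℕ} {γ a A : ℝ} {ut : Fin N → ℝ}

theorem exists_solution_mul_constExtension_pos (hm : m ≠ 0) (hn : n ≠ 0) (hγ : 0 ≤ γ)
    (hN : 1 ≤ N) (hut₀ : ∀ i, ut i ≠ 0) (hut : ∀ i, IsSimpleZero (onsite m n γ) (ut i)) :
    ∃ ε₀ > 0, ∃ K > 0, ∀ ε, 0 < ε → ε < ε₀ → ∃ u : ℤ → ℝ,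
      (∀ k, ε * discreteLaplacian u k = onsite m n γ (u k)) ∧
        u ∈ decayTube (limitSeq N ut) (K * ε) ∧ ∀ k, 0 < u k * constExtension N ut k := by
  have hzero : ∀ k, IsSimpleZero (onsite m n γ) (limitSeq N ut k) := fun k ↦ by
    by_cases hk : 1 ≤ k ∧ k ≤ (N : ℤ)
    · obtain ⟨i, hi⟩ := limitSeq_mem_range (ut := ut) hk
      exact hi ▸ hut i
    · exact limitSeq_eq_zero hk ▸ isSimpleZero_onsite_zero hm hn
  have : Nonempty (Fin N) := ⟨⟨0, hN⟩⟩
  obtain ⟨i₀, hmin⟩ := Finite.exists_min fun i ↦ |ut i|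
  have hmin_pos : 0 < |ut i₀| := abs_pos.2 (hut₀ i₀)
  obtain ⟨ε₀, hε₀, K, hK, hsol⟩ :=
    exists_solution_near_of_isSimpleZero hzero finite_support_limitSeq
  refine ⟨min ε₀ (min |ut i₀| 1 / K), by positivity, K, hK, fun ε hε hε' ↦ ?_⟩
  obtain ⟨hεε₀, hεr⟩ := lt_min_iff.1 hε'
  rw [lt_div_iff₀' hK] at hεr
  obtain ⟨u, heq, hclose⟩ := hsol ε (by rwa [abs_of_pos hε])
  rw [abs_of_pos hε] at hclose
  have hKε : 0 ≤ K * ε := by positivity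
  refine ⟨u, heq, hclose, mul_constExtension_pos hγ hε (min_le_right _ _) hN
    (fun i ↦ (min_le_left _ _).trans (hmin i)) heq (fun k ↦ ?_) ?_⟩
  · exact (abs_sub_le_of_mem_decayTube hKε hclose k).trans_lt hεr
  · exact tendsto_cofinite_zero_of_mem_decayTube finite_support_limitSeq hclose

theorem isSimpleZero_onsite_of_abs_eq_or (hm : 0 < m) (hmn : m < n) (ha : 0 < a) (haA : a < A)
    (hga : profile m n γ a = 0) (hgA : profile m n γ A = 0) {v : ℝ} (hv : |v| = a ∨ |v| = A) :
    IsSimpleZero (onsite m n γ) v := by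
  rcases hv with rfl | rfl
  · exact isSimpleZero_onsite_of_profile_eq_zero hm hmn (abs_pos.1 ha) (ha.trans haA).le haA.ne
      hga hgA
  · exact isSimpleZero_onsite_of_profile_eq_zero hm hmn (abs_pos.1 (ha.trans haA)) ha.le haA.ne'
      hgA hga

end Existence

/-- Existence of intrinsic localized modes near the anticontinuum limit, with
preservation of signs: the solution `u` is nowhere zero, matches the signs of the code
`ũ` on `1 ≤ n ≤ N`, the sign of `ũ_1` for `n ≤ 0`, the sign of `ũ_N` for `n ≥ N+1`;
in particular the number of sign alternations of `u` equals that of `ũ`. -/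
theorem exists_ILM_near_ACL_sign (p q : ℕ) (hp : 2 ≤ p) (hpq : p < q)
    (γ : ℝ) (hγ0 : 0 < γ) (hγ : γ < gammaCrit p q)
    (a A : ℝ) (ha : 0 < a) (haA : a < A)
    (hroota : 1 - a ^ (p - 1) + γ * a ^ (q - 1) = 0)
    (hrootA : 1 - A ^ (p - 1) + γ * A ^ (q - 1) = 0)
    (N : ℕ) (hN : 1 ≤ N) (ut : Fin N → ℝ)
    (hut : ∀ n, ut n = a ∨ ut n = -a ∨ ut n = A ∨ ut n = -A) :
    ∃ ε₀ > (0 : ℝ), ∃ C₀ > (0 : ℝ), ∀ ε : ℝ, 0 < ε → ε < ε₀ →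
      ∃ u : ℤ → ℝ,
        (∀ n : ℤ, ε * (u (n + 1) - 2 * u n + u (n - 1)) - u n
          + |u n| ^ (p - 1) * u n - γ * |u n| ^ (q - 1) * u n = 0) ∧
        Summable (fun n : ℤ => (u n) ^ 2) ∧
        Summable (fun n : ℤ => (u n - limitSeq N ut n) ^ 2) ∧
        Real.sqrt (∑' n : ℤ, (u n - limitSeq N ut n) ^ 2) ≤ C₀ * ε ∧
        (∀ n : ℤ, u n ≠ 0) ∧
        (∀ n : ℤ, 1 ≤ n → n ≤ (N : ℤ) →
          Real.sign (u n) = Real.sign (extFin N ut (n - 1).toNat)) ∧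
        (∀ n : ℤ, n ≤ 0 → Real.sign (u n) = Real.sign (extFin N ut 0)) ∧
        (∀ n : ℤ, (N : ℤ) + 1 ≤ n → Real.sign (u n) = Real.sign (extFin N ut (N - 1))) ∧
        Nat.card {n : ℤ | u n * u (n + 1) < 0}
          = ((Finset.range (N - 1)).filter
              (fun i => extFin N ut i * extFin N ut (i + 1) < 0)).card := by
  have hcode : ∀ i, |ut i| = a ∨ |ut i| = A := fun i ↦ by
    rw [abs_eq ha.le, abs_eq (ha.trans haA).le]
    simpa only [or_assoc] using hut i
  obtain ⟨ε₀, hε₀, K, hK, hsol⟩ := exists_solution_mul_constExtension_pos (m := p - 1) (n := q - 1)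
    (by omega) (by omega) hγ0.le hN
    (fun i ↦ abs_pos.1 ((hcode i).elim (· ▸ ha) (· ▸ ha.trans haA)))
    fun i ↦ isSimpleZero_onsite_of_abs_eq_or (by omega) (by omega) ha haA hroota hrootA (hcode i)
  refine ⟨ε₀, hε₀, K * (√(∑' n, decayWeight n ^ 2) + 1), by positivity, fun ε hε hεε₀ ↦ ?_⟩
  obtain ⟨u, heq, hclose, hsign⟩ := hsol ε hε hεε₀
  have hsgn := fun n ↦ sign_eq_of_mul_pos (hsign n)
  refine ⟨u, fun n ↦ ?_, summable_sq_of_mem_decayTube finite_support_limitSeq hclose,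
    summable_sq_of_abs_le_mul summable_decayWeight_sq hclose, ?_,
    fun n ↦ left_ne_zero_of_mul (hsign n).ne', fun n _ hn ↦ constExtension_of_le hn ▸ hsgn n,
    fun n hn ↦ constExtension_of_le_one (hn.trans zero_le_one) ▸ hsgn n,
    fun n hn ↦ constExtension_of_ge (by omega : (N : ℤ) ≤ n) ▸ hsgn n,
    card_mul_neg_of_mul_constExtension_pos hsign⟩
  · have := heq n
    simp only [discreteLaplacian, onsite, profile] at this
    linear_combination this
  · refine (sqrt_tsum_sq_le_of_abs_le_mul (by positivity) summable_decayWeight_sq hclose).trans ?_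
    nlinarith [mul_pos hK hε]
end

section
/- Let p, q be integers with 2 ≤ p < q, let γ ∈ (0, γ_{p,q}), and let a < A be the two positive roots of g(u) = 1 − u^{p−1} + γ u^{q−1}. Let N ≥ 1 and let ũ ∈ ℝ^N satisfy |ũ_n| = a for all n. Then all roots of the characteristic polynomial of the matrix product L̃⁺L̃⁻ are real; 0 is a simple root; exactly N − N₀(ũ) − 1 roots counted with multiplicity are negative; and exactly N₀(ũ) roots counted with multiplicity are positive. -/
/-- Extension of a vector `Fin N → ℝ` to `ℤ` by zero (0-indexed). -/
def extZ (N : ℕ) (ut : Fin N → ℝ) : ℤ → ℝ :=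
  fun k => if h : 0 ≤ k ∧ k < (N : ℤ) then ut ⟨k.toNat, by omega⟩ else 0

/-- The `N×N` symmetric tridiagonal matrix `L̃⁻` with diagonal entries
`(ũ_{n−1} + ũ_{n+1})/ũ_n` (with the convention `ũ₀ = ũ_{N+1} = 0`) and `−1` on the
sub- and super-diagonal. -/
noncomputable def Lminus (N : ℕ) (ut : Fin N → ℝ) : Matrix (Fin N) (Fin N) ℝ :=
  fun i j =>
    if i = j then (extZ N ut (((i : ℕ) : ℤ) - 1) + extZ N ut (((i : ℕ) : ℤ) + 1)) / ut i
    else if (((i : ℕ) : ℤ) - ((j : ℕ) : ℤ)).natAbs = 1 then -1 else 0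

/-- The `N×N` diagonal matrix `L̃⁺` with entries `1 − p|ũ_n|^{p−1} + γ q |ũ_n|^{q−1}`. -/
noncomputable def Lplus (N : ℕ) (p q : ℕ) (γ : ℝ) (ut : Fin N → ℝ) :
    Matrix (Fin N) (Fin N) ℝ :=
  Matrix.diagonal (fun n => 1 - (p : ℝ) * |ut n| ^ (p - 1) + γ * (q : ℝ) * |ut n| ^ (q - 1))

/-- The number `N₀(ũ)` of sign alternations of `ũ`. -/
noncomputable def nFlips (N : ℕ) (ut : Fin N → ℝ) : ℕ :=
  ((Finset.range (N - 1)).filter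
    (fun i => (if h : i < N then ut ⟨i, h⟩ else 0) *
              (if h : i + 1 < N then ut ⟨i + 1, h⟩ else 0) < 0)).card

/-!
Put `g u = 1 - u ^ (p - 1) + γ * u ^ (q - 1)`. On a code with `|ũ_n| = a` the matrix `L̃⁺` is the
scalar `(u g(u))'` at `u = a`, which is `a g'(a)` since `g a = 0`; it is negative by Bernoulli's
inequality, because `g` has a second root `A > a`. So it remains to find the inertia of `L̃⁻`.

With `D = diag ũ`, the matrix `D L̃⁻ D` is the Laplacian of the path on `N` vertices with edge
weights `ũ_n ũ_{n+1}`, hence equals `(1 - S)ᵀ W (1 - S)`, where `S` is the shift and `W` is the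
diagonal matrix of these weights, padded by one zero. By Sylvester's law of inertia `L̃⁻` has one
zero eigenvalue, one negative eigenvalue for each sign change of `ũ`, and otherwise positive ones.
-/

section Inertia

open Finset Matrix

lemma card_neg_add_card_eq_zero_add_card_pos {ι R : Type*} [Fintype ι] [Zero R] [LinearOrder R]
    (f : ι → R) : #{i | f i < 0} + #{i | f i = 0} + #{i | 0 < f i} = Fintype.card ι := by
  simp only [card_filter, ← sum_add_distrib]
  rw [← card_univ, card_eq_sum_ones]
  refine sum_congr rfl fun i _ ↦ ?_
  rcases lt_trichotomy (f i) 0 with hi | hi | hi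
  · simp [hi, hi.ne, hi.not_gt]
  · simp [hi]
  · simp [hi, hi.ne', hi.not_gt]

variable {K m n : Type*} [Field K] [LinearOrder K] [IsStrictOrderedRing K]
  [Fintype m] [DecidableEq m] [Fintype n] [DecidableEq n]

/- On the kernel of the positive rows of `Q *ᵥ ·` the form `d` is nonpositive while `e` is positive
definite, so this kernel is trivial. -/
lemma card_le_card_pos_of_transpose_mul_diagonal_mul {Q : Matrix m n K} {d : m → K} {e : n → K}
    (he : ∀ j, 0 < e j) (h : Qᵀ * diagonal d * Q = diagonal e) :
    Fintype.card n ≤ #{i | 0 < d i} := by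
  let f : (n → K) →ₗ[K] ({i // 0 < d i} → K) := LinearMap.funLeft K K Subtype.val ∘ₗ Q.mulVecLin
  have hf : Function.Injective f := by
    refine (injective_iff_map_eq_zero f).2 fun v hv ↦ by_contra fun hv0 ↦ ?_
    have hQv (i : m) (hi : 0 < d i) : (Q *ᵥ v) i = 0 := congrFun hv ⟨i, hi⟩
    obtain ⟨j, hj⟩ := Function.ne_iff.1 hv0
    have hpos : 0 < ∑ j, e j * v j ^ 2 :=
      sum_pos' (fun j _ ↦ mul_nonneg (he j).le (sq_nonneg _))
        ⟨j, mem_univ j, mul_pos (he j) (sq_pos_of_ne_zero hj)⟩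
    have hform : ∑ j, e j * v j ^ 2 = ∑ i, d i * (Q *ᵥ v) i ^ 2 := by
      have : v ⬝ᵥ (diagonal e *ᵥ v) = (Q *ᵥ v) ⬝ᵥ (diagonal d *ᵥ (Q *ᵥ v)) := by
        rw [← h, ← mulVec_mulVec, ← mulVec_mulVec, dotProduct_mulVec v, vecMul_transpose]
      simpa only [dotProduct, mulVec_diagonal, mul_left_comm, ← sq] using this
    have hnonpos : ∑ i, d i * (Q *ᵥ v) i ^ 2 ≤ 0 := sum_nonpos fun i _ ↦ by
      rcases lt_or_ge 0 (d i) with hi | hi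
      · simp [hQv i hi]
      · exact mul_nonpos_of_nonpos_of_nonneg hi (sq_nonneg _)
    exact (hpos.trans_eq hform).not_ge hnonpos
  simpa only [Module.finrank_fintype_fun_eq_card, Fintype.card_subtype] using
    LinearMap.finrank_le_finrank_of_injective hf

lemma card_pos_le_card_pos_of_transpose_mul_diagonal_mul {Q : Matrix m n K} {d : m → K}
    {e : n → K} (h : Qᵀ * diagonal d * Q = diagonal e) :
    #{j | 0 < e j} ≤ #{i | 0 < d i} := by
  rw [← Fintype.card_subtype]
  refine card_le_card_pos_of_transpose_mul_diagonal_mul (Q := Q.submatrix id Subtype.val)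
    (e := e ∘ Subtype.val) (fun j ↦ j.2) ?_
  rw [← submatrix_diagonal e _ Subtype.val_injective, ← h,
    submatrix_mul _ _ _ id _ Function.bijective_id, submatrix_mul _ _ _ id _ Function.bijective_id,
    submatrix_id_id, transpose_submatrix]

section Congruence

variable {Q : Matrix n n K} {d e : n → K}

lemma card_pos_eq_card_pos_of_transpose_mul_diagonal_mul (hQ : IsUnit Q.det)
    (h : Qᵀ * diagonal d * Q = diagonal e) : #{i | 0 < e i} = #{i | 0 < d i} := by
  refine (card_pos_le_card_pos_of_transpose_mul_diagonal_mul h).antisymm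
    (card_pos_le_card_pos_of_transpose_mul_diagonal_mul (Q := Q⁻¹) ?_)
  have hQt : IsUnit Qᵀ.det := by rwa [det_transpose]
  rw [← h, transpose_nonsing_inv, mul_assoc Qᵀ, nonsing_inv_mul_cancel_left _ _ hQt,
    mul_nonsing_inv_cancel_right _ _ hQ]

lemma card_neg_eq_card_neg_of_transpose_mul_diagonal_mul (hQ : IsUnit Q.det)
    (h : Qᵀ * diagonal d * Q = diagonal e) : #{i | e i < 0} = #{i | d i < 0} := by
  have hneg : Qᵀ * diagonal (fun i ↦ -d i) * Q = diagonal fun i ↦ -e i := by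
    rw [← diagonal_neg, ← diagonal_neg, ← h, Matrix.mul_neg, Matrix.neg_mul]
  simpa only [Left.neg_pos_iff] using
    card_pos_eq_card_pos_of_transpose_mul_diagonal_mul hQ hneg

lemma card_eq_zero_eq_card_eq_zero_of_transpose_mul_diagonal_mul (hQ : IsUnit Q.det)
    (h : Qᵀ * diagonal d * Q = diagonal e) : #{i | e i = 0} = #{i | d i = 0} := by
  have hpos := card_pos_eq_card_pos_of_transpose_mul_diagonal_mul hQ h
  have hneg := card_neg_eq_card_neg_of_transpose_mul_diagonal_mul hQ h
  have hd := card_neg_add_card_eq_zero_add_card_pos d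
  have he := card_neg_add_card_eq_zero_add_card_pos e
  omega

end Congruence

end Inertia

section Spectrum

open Finset Matrix Polynomial

lemma im_eq_zero_of_mem_roots_map {f : ℝ[X]} (hf : f.Splits) {z : ℂ}
    (hz : z ∈ (f.map (algebraMap ℝ ℂ)).roots) : z.im = 0 := by
  rw [hf.roots_map] at hz
  obtain ⟨x, -, rfl⟩ := Multiset.mem_map.1 hz
  exact Complex.ofReal_im x

variable {n : Type*} [Fintype n] [DecidableEq n]

lemma card_filter_roots_charpoly {M : Matrix n n ℝ} (hM : M.IsHermitian) (r : ℝ → Prop)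
    [DecidablePred r] : (M.charpoly.roots.filter r).card = #{i | r (hM.eigenvalues i)} := by
  rw [hM.roots_charpoly_eq_eigenvalues, Multiset.filter_map, Multiset.card_map]
  rfl

variable {M P : Matrix n n ℝ} {d : n → ℝ}

lemma isHermitian_of_eq_transpose_mul_diagonal_mul (h : M = Pᵀ * diagonal d * P) :
    M.IsHermitian := by
  rw [h, ← conjTranspose_eq_transpose_of_trivial]
  exact isHermitian_conjTranspose_mul_mul P (isHermitian_diagonal d)

lemma exists_transpose_mul_diagonal_mul_eq_diagonal_eigenvalues (hP : IsUnit P.det)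
    (h : M = Pᵀ * diagonal d * P) (hM : M.IsHermitian) :
    ∃ Q : Matrix n n ℝ, IsUnit Q.det ∧ Qᵀ * diagonal d * Q = diagonal hM.eigenvalues := by
  let U : Matrix n n ℝ := hM.eigenvectorUnitary
  have hU : IsUnit U.det :=
    (isUnit_iff_isUnit_det U).1 (IsUnit.of_mul_eq_one_right _ (Unitary.coe_star_mul_self _))
  have hdiag : Uᵀ * M * U = diagonal hM.eigenvalues := by
    have := hM.conjStarAlgAut_star_eigenvectorUnitary
    rwa [Unitary.conjStarAlgAut_star_apply, star_eq_conjTranspose,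
      conjTranspose_eq_transpose_of_trivial] at this
  refine ⟨P * U, by rw [det_mul]; exact hP.mul hU, ?_⟩
  rw [← hdiag, h, transpose_mul]
  simp only [Matrix.mul_assoc]

lemma card_filter_neg_roots_charpoly (hP : IsUnit P.det) (h : M = Pᵀ * diagonal d * P) :
    (M.charpoly.roots.filter (· < 0)).card = #{i | d i < 0} := by
  have hM := isHermitian_of_eq_transpose_mul_diagonal_mul h
  obtain ⟨Q, hQ, hQd⟩ := exists_transpose_mul_diagonal_mul_eq_diagonal_eigenvalues hP h hM
  rw [card_filter_roots_charpoly hM, card_neg_eq_card_neg_of_transpose_mul_diagonal_mul hQ hQd]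

lemma card_filter_pos_roots_charpoly (hP : IsUnit P.det) (h : M = Pᵀ * diagonal d * P) :
    (M.charpoly.roots.filter (0 < ·)).card = #{i | 0 < d i} := by
  have hM := isHermitian_of_eq_transpose_mul_diagonal_mul h
  obtain ⟨Q, hQ, hQd⟩ := exists_transpose_mul_diagonal_mul_eq_diagonal_eigenvalues hP h hM
  rw [card_filter_roots_charpoly hM, card_pos_eq_card_pos_of_transpose_mul_diagonal_mul hQ hQd]

lemma rootMultiplicity_zero_charpoly (hP : IsUnit P.det) (h : M = Pᵀ * diagonal d * P) :
    M.charpoly.rootMultiplicity 0 = #{i | d i = 0} := by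
  have hM := isHermitian_of_eq_transpose_mul_diagonal_mul h
  obtain ⟨Q, hQ, hQd⟩ := exists_transpose_mul_diagonal_mul_eq_diagonal_eigenvalues hP h hM
  rw [← count_roots, Multiset.count_eq_card_filter_eq, card_filter_roots_charpoly hM]
  simp only [eq_comm (a := (0 : ℝ))]
  exact card_eq_zero_eq_card_eq_zero_of_transpose_mul_diagonal_mul hQ hQd

end Spectrum

section Slope

lemma mul_rpow_sub_one_lt_mul_rpow_sub_one {r s t : ℝ} (hr : 0 < r) (hrs : r < s) (ht0 : 0 ≤ t)
    (ht1 : t ≠ 1) : s * (t ^ r - 1) < r * (t ^ s - 1) := by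
  have hne : t ^ r - 1 ≠ 0 := fun h ↦
    ht1 (Real.rpow_left_injOn hr.ne' ht0 (zero_le_one' ℝ) (by simpa [sub_eq_zero] using h))
  have hbernoulli := one_add_mul_self_lt_rpow_one_add
    (by linarith [Real.rpow_nonneg ht0 r]) hne ((one_lt_div hr).2 hrs)
  rw [add_sub_cancel, ← Real.rpow_mul ht0, mul_div_cancel₀ s hr.ne'] at hbernoulli
  calc s * (t ^ r - 1) = r * (s / r * (t ^ r - 1)) := by field_simp
    _ < r * (t ^ s - 1) := by gcongr; linarith

lemma mul_mul_pow_lt_mul_pow_of_sub_eq_sub {m n : ℕ} (hm : 0 < m) (hmn : m < n) {γ a A : ℝ}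
    (ha : 0 < a) (haA : a < A) (h : A ^ m - γ * A ^ n = a ^ m - γ * a ^ n) :
    γ * n * a ^ n < m * a ^ m := by
  obtain ⟨t, rfl⟩ : ∃ t, A = a * t := ⟨A / a, by field_simp⟩
  have ht : 1 < t := by rwa [lt_mul_iff_one_lt_right ha] at haA
  have hbernoulli : n * (t ^ m - 1) < m * (t ^ n - 1) := by
    exact_mod_cast mul_rpow_sub_one_lt_mul_rpow_sub_one (r := m) (s := n) (by exact_mod_cast hm)
      (by exact_mod_cast hmn) (zero_le_one.trans ht.le) ht.ne'
  have hdiff : γ * a ^ n * (t ^ n - 1) = a ^ m * (t ^ m - 1) := by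
    rw [mul_pow, mul_pow] at h
    linarith
  have htn : 0 < t ^ n - 1 := sub_pos.2 (one_lt_pow₀ ht (hm.trans hmn).ne')
  refine lt_of_mul_lt_mul_right ?_ htn.le
  calc γ * n * a ^ n * (t ^ n - 1) = a ^ m * (n * (t ^ m - 1)) := by
        linear_combination (n : ℝ) * hdiff
    _ < a ^ m * (m * (t ^ n - 1)) := by gcongr
    _ = m * a ^ m * (t ^ n - 1) := by ring

lemma Lplus_entry_neg {p q : ℕ} (hp : 2 ≤ p) (hpq : p < q) {γ a A : ℝ} (ha : 0 < a) (haA : a < A)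
    (hroota : 1 - a ^ (p - 1) + γ * a ^ (q - 1) = 0)
    (hrootA : 1 - A ^ (p - 1) + γ * A ^ (q - 1) = 0) :
    1 - p * a ^ (p - 1) + γ * q * a ^ (q - 1) < 0 := by
  obtain ⟨m, rfl⟩ := Nat.exists_eq_add_of_le' (one_le_two.trans hp)
  obtain ⟨n, rfl⟩ := Nat.exists_eq_add_of_le' (Nat.one_le_of_lt hpq)
  simp only [Nat.add_sub_cancel] at hroota hrootA ⊢
  have hslope := mul_mul_pow_lt_mul_pow_of_sub_eq_sub (γ := γ) (m := m) (n := n) (by omega)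
    (by omega) ha haA (by linarith)
  push_cast
  linarith

end Slope

section Path

open Finset Matrix

variable {N : ℕ}

/-- The upper shift matrix, with ones exactly on the superdiagonal. -/
def shiftMatrix (N : ℕ) (R : Type*) [Zero R] [One R] : Matrix (Fin N) (Fin N) R :=
  of fun i j ↦ if i.val + 1 = j.val then 1 else 0

/-- The weight `u k * u (k + 1)` of the edge `{k, k + 1}` of the path on the entries of `u`; the
extension by zero makes it vanish at the two edges `{-1, 0}` and `{N - 1, N}` leaving the path. -/
def edgeWeight (u : Fin N → ℝ) (k : ℤ) : ℝ := extZ N u k * extZ N u (k + 1)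

lemma extZ_natCast (u : Fin N → ℝ) (k : ℕ) :
    extZ N u k = if h : k < N then u ⟨k, h⟩ else 0 := by
  simp [extZ]

lemma extZ_val (u : Fin N → ℝ) (i : Fin N) : extZ N u i.val = u i := by
  simp [extZ_natCast]

lemma edgeWeight_neg_one (u : Fin N → ℝ) : edgeWeight u (-1) = 0 := by
  simp [edgeWeight, extZ]

lemma edgeWeight_val_of_succ_eq (u : Fin N → ℝ) {i j : Fin N} (hij : i.val + 1 = j.val) :
    edgeWeight u i.val = u i * u j := by
  rw [edgeWeight, extZ_val, ← extZ_val u j, ← hij, Nat.cast_succ]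

lemma edgeWeight_eq_zero_iff {u : Fin N → ℝ} (hu : ∀ i, u i ≠ 0) (i : Fin N) :
    edgeWeight u i.val = 0 ↔ i.val + 1 = N := by
  rw [edgeWeight, extZ_val, mul_eq_zero, or_iff_right (hu i), ← Nat.cast_succ, extZ_natCast]
  split_ifs with h
  · simp [hu, h.ne]
  · simpa using (Nat.succ_le_of_lt i.isLt).antisymm (not_lt.1 h)

lemma card_edgeWeight_eq_zero (hN : 1 ≤ N) {u : Fin N → ℝ} (hu : ∀ i, u i ≠ 0) :
    #{i : Fin N | edgeWeight u i.val = 0} = 1 := by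
  refine card_eq_one.2 ⟨⟨N - 1, by omega⟩, ?_⟩
  ext i
  rw [mem_filter_univ, edgeWeight_eq_zero_iff hu, mem_singleton, Fin.ext_iff]
  dsimp only
  omega

lemma card_edgeWeight_neg (u : Fin N → ℝ) :
    #{i : Fin N | edgeWeight u i.val < 0} = nFlips N u := by
  have hflips : nFlips N u = #{k ∈ range (N - 1) | edgeWeight u ((k : ℕ) : ℤ) < 0} := by
    refine congrArg card (filter_congr fun k _ ↦ ?_)
    rw [edgeWeight, ← Nat.cast_succ, extZ_natCast, extZ_natCast]
  rw [hflips]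
  cases N with
  | zero => simp
  | succ N =>
    have hlast : edgeWeight u ((N : ℕ) : ℤ) = 0 := by
      rw [edgeWeight, ← Nat.cast_succ, extZ_natCast u (N + 1), dif_neg (lt_irrefl _), mul_zero]
    simp only [card_filter, Nat.add_sub_cancel]
    rw [Fin.sum_univ_eq_sum_range (fun k : ℕ ↦ if edgeWeight u k < 0 then 1 else 0),
      sum_range_succ, hlast, if_neg (lt_irrefl _), add_zero]

lemma card_edgeWeight_pos (hN : 1 ≤ N) {u : Fin N → ℝ} (hu : ∀ i, u i ≠ 0) :
    #{i : Fin N | 0 < edgeWeight u i.val} = N - nFlips N u - 1 := by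
  have htotal := card_neg_add_card_eq_zero_add_card_pos fun i : Fin N ↦ edgeWeight u i.val
  rw [card_edgeWeight_neg, card_edgeWeight_eq_zero hN hu, Fintype.card_fin] at htotal
  omega

lemma det_one_sub_shiftMatrix {R : Type*} [CommRing R] : (1 - shiftMatrix N R).det = 1 := by
  have hupper : (1 - shiftMatrix N R).IsUpperTriangular := fun i j (hji : j < i) ↦ by
    have : ¬ i.val + 1 = j.val := by omega
    simp [shiftMatrix, hji.ne', this]
  rw [det_of_isUpperTriangular hupper]
  simp [shiftMatrix]

lemma shiftMatrix_transpose_mul_diagonal_mul {R : Type*} [Semiring R]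
    {w : ℤ → R} (hw : w (-1) = 0) :
    (shiftMatrix N R)ᵀ * diagonal (fun i ↦ w i.val) * shiftMatrix N R =
      diagonal fun i ↦ w (i.val - 1) := by
  ext i j
  rw [mul_apply, diagonal_apply]
  simp only [mul_diagonal, transpose_apply, shiftMatrix, of_apply]
  rcases Nat.eq_zero_or_pos i.val with hi | hi
  · simp [hi, hw]
  · rw [sum_eq_single ⟨i.val - 1, by omega⟩]
    · have hpred : ((i.val - 1 : ℕ) : ℤ) = i.val - 1 := by omega
      simp only [Nat.sub_add_cancel hi, hpred, Fin.ext_iff, if_true, one_mul, mul_ite, mul_one,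
        mul_zero]
    · intro k _ hk
      have : ¬ k.val + 1 = i.val := fun h ↦ hk (Fin.ext (by dsimp only; omega))
      simp [this]
    · simp

lemma one_sub_shiftMatrix_transpose_mul_diagonal_mul {R : Type*} [Ring R] {w : ℤ → R}
    (hw : w (-1) = 0) :
    (1 - shiftMatrix N R)ᵀ * diagonal (fun i ↦ w i.val) * (1 - shiftMatrix N R) =
      diagonal (fun i ↦ w (i.val - 1) + w i.val) -
        diagonal (fun i ↦ w i.val) * shiftMatrix N R -
        (shiftMatrix N R)ᵀ * diagonal fun i ↦ w i.val := by
  rw [← diagonal_add, ← shiftMatrix_transpose_mul_diagonal_mul hw, transpose_sub,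
    transpose_one]
  noncomm_ring

lemma diagonal_mul_Lminus_mul_diagonal {u : Fin N → ℝ} (hu : ∀ i, u i ≠ 0) :
    diagonal u * Lminus N u * diagonal u =
      (1 - shiftMatrix N ℝ)ᵀ * diagonal (fun i ↦ edgeWeight u i.val) * (1 - shiftMatrix N ℝ) := by
  rw [one_sub_shiftMatrix_transpose_mul_diagonal_mul (edgeWeight_neg_one u)]
  ext i j
  simp only [mul_diagonal, diagonal_mul, Matrix.sub_apply, transpose_apply, shiftMatrix, of_apply,
    diagonal_apply, Lminus]
  rcases eq_or_ne i j with rfl | hij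
  · have hui := hu i
    simp [edgeWeight, extZ_val]
    field_simp
  · rw [if_neg hij, if_neg hij]
    by_cases hsucc : i.val + 1 = j.val
    · have : ¬ j.val + 1 = i.val := by omega
      rw [if_pos (by omega), edgeWeight_val_of_succ_eq u hsucc]
      simp [hsucc, this]
    · by_cases hpred : j.val + 1 = i.val
      · rw [if_pos (by omega), edgeWeight_val_of_succ_eq u hpred]
        simp [hsucc, hpred, mul_comm]
      · rw [if_neg (by omega)]
        simp [hsucc, hpred]

lemma exists_Lminus_eq_transpose_mul_diagonal_mul {u : Fin N → ℝ} (hu : ∀ i, u i ≠ 0) :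
    ∃ P : Matrix (Fin N) (Fin N) ℝ, IsUnit P.det ∧
      Lminus N u = Pᵀ * diagonal (fun i ↦ edgeWeight u i.val) * P := by
  have hinv : diagonal u * diagonal u⁻¹ = 1 := by simp [diagonal_mul_diagonal, hu]
  have hinv' : diagonal u⁻¹ * diagonal u = 1 := by simp [diagonal_mul_diagonal, hu]
  refine ⟨(1 - shiftMatrix N ℝ) * diagonal u⁻¹, ?_, ?_⟩
  · rw [det_mul, det_one_sub_shiftMatrix, one_mul]
    exact (isUnit_iff_isUnit_det _).1 (IsUnit.of_mul_eq_one _ hinv')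
  · calc Lminus N u = diagonal u⁻¹ * diagonal u * Lminus N u * (diagonal u * diagonal u⁻¹) := by
          rw [hinv, hinv', Matrix.one_mul, Matrix.mul_one]
      _ = diagonal u⁻¹ * (diagonal u * Lminus N u * diagonal u) * diagonal u⁻¹ := by
          simp only [Matrix.mul_assoc]
      _ = _ := by
          rw [diagonal_mul_Lminus_mul_diagonal hu, transpose_mul, diagonal_transpose]
          simp only [Matrix.mul_assoc]

lemma Lplus_eq_smul_one {u : Fin N → ℝ} {a : ℝ} (hu : ∀ i, |u i| = a) (p q : ℕ) (γ : ℝ) :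
    Lplus N p q γ u = (1 - p * a ^ (p - 1) + γ * q * a ^ (q - 1)) • 1 := by
  simp only [Lplus, hu, smul_one_eq_diagonal]

end Path

/-- For a code with `|ũ_n| = a` for all `n`, all roots of the characteristic polynomial
of `L̃⁺L̃⁻` are real; `0` is a simple root; exactly `N − N₀(ũ) − 1` roots are negative
and exactly `N₀(ũ)` roots are positive, counted with multiplicity. -/
theorem LplusLminus_spectrum_alla (p q : ℕ) (hp : 2 ≤ p) (hpq : p < q)
    (γ : ℝ) (hγ0 : 0 < γ) (hγ : γ < gammaCrit p q)
    (a A : ℝ) (ha : 0 < a) (haA : a < A)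
    (hroota : 1 - a ^ (p - 1) + γ * a ^ (q - 1) = 0)
    (hrootA : 1 - A ^ (p - 1) + γ * A ^ (q - 1) = 0)
    (N : ℕ) (hN : 1 ≤ N) (ut : Fin N → ℝ) (hut : ∀ n, |ut n| = a) :
    (∀ z ∈ ((Lplus N p q γ ut * Lminus N ut).charpoly.map (algebraMap ℝ ℂ)).roots,
      z.im = 0) ∧
    (Lplus N p q γ ut * Lminus N ut).charpoly.rootMultiplicity 0 = 1 ∧
    (((Lplus N p q γ ut * Lminus N ut).charpoly.roots.filter (fun x => x < 0)).card
      = N - nFlips N ut - 1) ∧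
    (((Lplus N p q γ ut * Lminus N ut).charpoly.roots.filter (fun x => 0 < x)).card
      = nFlips N ut) := by
  have hu (i : Fin N) : ut i ≠ 0 := abs_pos.1 (ha.trans_eq (hut i).symm)
  have hc := Lplus_entry_neg hp hpq ha haA hroota hrootA
  rw [Lplus_eq_smul_one hut, smul_mul_assoc, one_mul]
  set c := 1 - p * a ^ (p - 1) + γ * q * a ^ (q - 1)
  obtain ⟨P, hP, hL⟩ := exists_Lminus_eq_transpose_mul_diagonal_mul hu
  have hcL : c • Lminus N ut =
      P.transpose * Matrix.diagonal (c • fun i : Fin N ↦ edgeWeight ut i.val) * P := by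
    rw [hL, Matrix.diagonal_smul, Matrix.mul_smul, Matrix.smul_mul]
  refine ⟨fun z hz ↦ im_eq_zero_of_mem_roots_map
    (isHermitian_of_eq_transpose_mul_diagonal_mul hcL).splits_charpoly hz, ?_, ?_, ?_⟩
  · rw [rootMultiplicity_zero_charpoly hP hcL, ← card_edgeWeight_eq_zero hN hu]
    simp only [Pi.smul_apply, smul_eq_zero, hc.ne, false_or]
  · rw [card_filter_neg_roots_charpoly hP hcL, ← card_edgeWeight_pos hN hu]
    simp only [Pi.smul_apply, smul_neg_iff_of_neg_left hc]
  · rw [card_filter_pos_roots_charpoly hP hcL, ← card_edgeWeight_neg]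
    simp only [Pi.smul_apply, smul_pos_iff_of_neg_left hc]
end

section
/- Let p, q be integers with 2 ≤ p < q, let γ ∈ (0, γ_{p,q}), and let a < A be the two positive roots of g(u) = 1 − u^{p−1} + γ u^{q−1}. Let N ≥ 1 and let ũ ∈ ℝ^N satisfy |ũ_n| ∈ {a, A} for all n and be sign-alternating, i.e., ũ_n ũ_{n+1} < 0 for all n ∈ {1,…,N−1}; set K = #{n : |ũ_n| = a}. Assume the quantity s = ((L̃⁺)⁻¹ũ)·ũ = K a²/f'(a) + (N−K) A²/f'(A) is nonzero, and set σ₀ = 1 if s < 0 and σ₀ = 0 if s > 0. Then all roots of the characteristic polynomial of the matrix product L̃⁺L̃⁻ are real; 0 is a simple root; exactly N − K − (1 − σ₀) roots counted with multiplicity are negative; and exactly K − σ₀ roots counted with multiplicity are positive. -/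
/-!
For `ũ` alternating, `−L̃⁻` is the adjacency matrix `S` of the path, shifted by a diagonal so that
it annihilates `ũ`. Its quadratic form is `x ↦ −½ ∑ Sᵢⱼ ũᵢ ũⱼ (xᵢ/ũᵢ − xⱼ/ũⱼ)²`, which is
nonnegative because neighbours have opposite signs and vanishes only on `span ũ` because the path
is connected.

Factor `−L̃⁻ = Bᵀ B`. Then `L̃⁺ L̃⁻ = (−L̃⁺) Bᵀ B` has the characteristic polynomial of the
symmetric matrix `B (−L̃⁺) Bᵀ`, whose inertia is that of the form `−L̃⁺` pulled back along `Bᵀ`.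
The range of `Bᵀ` is the hyperplane orthogonal to `ũ`, and `(L̃⁺)⁻¹ ũ` spans its orthogonal
complement for the form `−L̃⁺`. The form takes the value `−s` on this vector, so the pullback loses
exactly one square, of the sign of `−s`, from the inertia of `−L̃⁺`. Bernoulli's inequality gives
`f'(a) < 0 < f'(A)`, so `−L̃⁺` has `K` positive and `N − K` negative squares.
-/

section Signature

open QuadraticMap

theorem weightedSumSquares_prod_equivalent {R ι κ : Type*} [CommSemiring R] [Fintype ι] [Fintype κ]
    (w : ι → R) (w' : κ → R) :
    ((weightedSumSquares R w).prod (weightedSumSquares R w')).Equivalent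
      (weightedSumSquares R (Sum.elim w w')) :=
  ⟨{ (LinearEquiv.sumArrowLequivProdArrow ι κ R R).symm with
      map_app' := fun x ↦ by simp [weightedSumSquares_apply, LinearEquiv.sumArrowLequivProdArrow,
        Equiv.sumArrowEquivProdArrow] }⟩

variable {𝕜 V W : Type*} [Field 𝕜] [LinearOrder 𝕜] [AddCommGroup V] [Module 𝕜 V]
  [FiniteDimensional 𝕜 V] [AddCommGroup W] [Module 𝕜 W] [FiniteDimensional 𝕜 W]

theorem sigPos_comp_le (Q : QuadraticForm 𝕜 V) (f : W →ₗ[𝕜] V) :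
    sigPos (Q.comp f) ≤ sigPos Q := by
  obtain ⟨U, hU, hpos⟩ := exists_finrank_eq_sigPos_and_posDef (Q.comp f)
  have hinj : Function.Injective (f.domRestrict U) := by
    refine (injective_iff_map_eq_zero _).mpr fun x hx ↦ by_contra fun hx0 ↦ (hpos x hx0).ne' ?_
    rw [restrict_apply, comp_apply, ← LinearMap.domRestrict_apply, hx, map_zero]
  rw [← hU, ← LinearMap.finrank_range_of_inj hinj]
  refine le_sigPos_of_posDef Q ?_
  rintro ⟨_, x, rfl⟩ hx
  exact hpos x fun hx0 ↦ hx (by simp [hx0])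

theorem sigPos_comp_of_surjective (Q : QuadraticForm 𝕜 V) {f : W →ₗ[𝕜] V}
    (hf : Function.Surjective f) : sigPos (Q.comp f) = sigPos Q := by
  obtain ⟨g, hg⟩ := f.exists_rightInverse_of_surjective (LinearMap.range_eq_top.mpr hf)
  have hQ : (Q.comp f).comp g = Q := by
    ext x
    exact congrArg Q (LinearMap.congr_fun hg x)
  exact (sigPos_comp_le Q f).antisymm <|
    (congrArg sigPos hQ).ge.trans (sigPos_comp_le (Q.comp f) g)

variable [IsStrictOrderedRing 𝕜]

theorem sigPos_prod (Q : QuadraticForm 𝕜 V) (Q' : QuadraticForm 𝕜 W) :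
    sigPos (Q.prod Q') = sigPos Q + sigPos Q' := by
  have : Invertible (2 : 𝕜) := invertibleOfNonzero two_ne_zero
  obtain ⟨w, e⟩ := QuadraticForm.equivalent_weightedSumSquares Q
  obtain ⟨w', e'⟩ := QuadraticForm.equivalent_weightedSumSquares Q'
  have hprod : (Q.prod Q').Equivalent (weightedSumSquares 𝕜 (Sum.elim w w')) :=
    Equivalent.trans ⟨e.some.prod e'.some⟩ (weightedSumSquares_prod_equivalent w w')
  rw [QuadraticForm.sigPos_of_equiv_weightedSumSquares e,
    QuadraticForm.sigPos_of_equiv_weightedSumSquares e',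
    QuadraticForm.sigPos_of_equiv_weightedSumSquares hprod]
  simp only [Set.ncard_eq_toFinset_card', Set.toFinset_ofPred, Finset.card_filter,
    Fintype.sum_sum_type, Sum.elim_inl, Sum.elim_inr]
  rfl

theorem sigPos_self (Q : QuadraticForm 𝕜 𝕜) : sigPos Q = if 0 < Q 1 then 1 else 0 := by
  have e : Q.Equivalent (weightedSumSquares 𝕜 fun _ : Unit ↦ Q 1) :=
    ⟨{ (LinearEquiv.funUnique Unit 𝕜 𝕜).symm with
        map_app' := fun x ↦ by
          have := Q.map_smul x 1
          simp_all [weightedSumSquares_apply, mul_comm] }⟩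
  rw [QuadraticForm.sigPos_of_equiv_weightedSumSquares e]
  split_ifs with h <;> simp [h]

theorem sigPos_eq_sigPos_comp_add_ite (Q : QuadraticForm 𝕜 V) {f : W →ₗ[𝕜] V} {v : V}
    (horth : ∀ y, polar Q (f y) v = 0) (htop : LinearMap.range f ⊔ 𝕜 ∙ v = ⊤) :
    sigPos Q = sigPos (Q.comp f) + if 0 < Q v then 1 else 0 := by
  let g : 𝕜 →ₗ[𝕜] V := LinearMap.toSpanSingleton 𝕜 V v
  have hsurj : Function.Surjective (f.coprod g) := by
    rw [← LinearMap.range_eq_top, LinearMap.range_coprod, LinearMap.range_toSpanSingleton, htop]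
  have hsplit : Q.comp (f.coprod g) = (Q.comp f).prod (Q.comp g) := by
    ext ⟨y, t⟩
    have : polar Q (f y) (t • v) = 0 := by rw [polar_smul_right, horth, smul_zero]
    simpa [g, polar, sub_sub, sub_eq_zero] using this
  rw [← sigPos_comp_of_surjective Q hsurj, hsplit, sigPos_prod, sigPos_self]
  simp [g]

theorem sigNeg_eq_sigNeg_comp_add_ite (Q : QuadraticForm 𝕜 V) {f : W →ₗ[𝕜] V} {v : V}
    (horth : ∀ y, polar Q (f y) v = 0) (htop : LinearMap.range f ⊔ 𝕜 ∙ v = ⊤) :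
    sigNeg Q = sigNeg (Q.comp f) + if Q v < 0 then 1 else 0 := by
  have h := sigPos_eq_sigPos_comp_add_ite (-Q) (f := f) (v := v)
    (fun y ↦ by simpa [polar_neg] using horth y) htop
  simpa using! h

end Signature

section MatrixForm

open Matrix QuadraticMap

variable {R n : Type*} [CommRing R] [Fintype n] [DecidableEq n]

theorem toQuadraticForm'_apply_eq_dotProduct (M : Matrix n n R) (x : n → R) :
    M.toQuadraticForm' x = x ⬝ᵥ M *ᵥ x :=
  toLinearMap₂'_apply' M x x

theorem toQuadraticForm'_comp_mulVecLin {m : Type*} [Fintype m] [DecidableEq m]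
    (M : Matrix n n R) (B : Matrix n m R) :
    M.toQuadraticForm'.comp B.mulVecLin = (Bᵀ * M * B).toQuadraticForm' := by
  ext x
  simp [toQuadraticForm'_apply_eq_dotProduct, ← mulVec_mulVec, dotProduct_mulVec, vecMul_transpose]

theorem toQuadraticForm'_diagonal (d : n → R) :
    (diagonal d).toQuadraticForm' = weightedSumSquares R d := by
  ext x
  simp only [toQuadraticForm'_apply_eq_dotProduct, dotProduct, mulVec_diagonal,
    weightedSumSquares_apply, smul_eq_mul]
  exact Finset.sum_congr rfl fun i _ ↦ by ring

theorem polar_toQuadraticForm' {M : Matrix n n R} (hM : M.IsSymm) (x y : n → R) :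
    polar M.toQuadraticForm' x y = 2 * (x ⬝ᵥ M *ᵥ y) := by
  have hsymm : y ⬝ᵥ M *ᵥ x = x ⬝ᵥ M *ᵥ y := by
    rw [dotProduct_mulVec, ← mulVec_transpose, dotProduct_comm, hM.eq]
  simp only [polar, toQuadraticForm'_apply_eq_dotProduct, mulVec_add, dotProduct_add,
    add_dotProduct, hsymm]
  ring

theorem polar_toQuadraticForm'_transpose_mulVecLin {m : Type*} [Fintype m] {M : Matrix n n R}
    (hM : M.IsSymm) {B : Matrix m n R} {v : n → R} (hv : B *ᵥ M *ᵥ v = 0) (y : m → R) :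
    polar M.toQuadraticForm' (Bᵀ.mulVecLin y) v = 0 := by
  rw [polar_toQuadraticForm' hM, mulVecLin_apply, dotProduct_comm, dotProduct_mulVec,
    vecMul_transpose, hv, zero_dotProduct, mul_zero]

end MatrixForm

section Inertia

open Matrix QuadraticMap

variable {n : Type*} [Fintype n] [DecidableEq n]

theorem equivalent_weightedSumSquares_eigenvalues {M : Matrix n n ℝ} (hM : M.IsHermitian) :
    M.toQuadraticForm'.Equivalent (weightedSumSquares ℝ hM.eigenvalues) := by
  let U := hM.eigenvectorUnitary
  have hU : (U : Matrix n n ℝ)ᵀ * M * U = diagonal hM.eigenvalues := by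
    simpa [Unitary.conjStarAlgAut_star_apply, star_eq_conjTranspose] using!
      hM.conjStarAlgAut_star_eigenvectorUnitary
  have hcomp : M.toQuadraticForm'.comp (UnitaryGroup.toLinearEquiv U : (n → ℝ) →ₗ[ℝ] n → ℝ) =
      weightedSumSquares ℝ hM.eigenvalues := by
    rw [← toQuadraticForm'_diagonal, ← hU]
    exact toQuadraticForm'_comp_mulVecLin M U.1
  exact hcomp ▸ ⟨isometryEquivOfCompLinearEquiv _ _⟩

theorem sigPos_eq_card_roots_charpoly {M : Matrix n n ℝ} (hM : M.IsHermitian) :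
    sigPos M.toQuadraticForm' = (M.charpoly.roots.filter (0 < ·)).card := by
  rw [QuadraticForm.sigPos_of_equiv_weightedSumSquares
      (equivalent_weightedSumSquares_eigenvalues hM),
    hM.roots_charpoly_eq_eigenvalues, Multiset.filter_map, Multiset.card_map,
    Set.ncard_eq_toFinset_card', Set.toFinset_ofPred]
  rfl

theorem sigNeg_eq_card_roots_charpoly {M : Matrix n n ℝ} (hM : M.IsHermitian) :
    sigNeg M.toQuadraticForm' = (M.charpoly.roots.filter (· < 0)).card := by
  rw [QuadraticForm.sigNeg_of_equiv_weightedSumSquares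
      (equivalent_weightedSumSquares_eigenvalues hM),
    hM.roots_charpoly_eq_eigenvalues, Multiset.filter_map, Multiset.card_map,
    Set.ncard_eq_toFinset_card', Set.toFinset_ofPred]
  rfl

end Inertia

section ProductInertia

open Matrix QuadraticMap
open scoped MatrixOrder

theorem range_transpose_mulVecLin_sup_span_eq_top {K m n : Type*} [Field K] [Fintype m]
    [Fintype n] {B : Matrix m n K} {u v : n → K}
    (hker : LinearMap.ker B.mulVecLin = K ∙ u) (huv : u ⬝ᵥ v ≠ 0) :
    LinearMap.range Bᵀ.mulVecLin ⊔ K ∙ v = ⊤ := by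
  have hu : u ≠ 0 := by rintro rfl; simp at huv
  have hv : v ≠ 0 := by rintro rfl; simp at huv
  have hBu : B *ᵥ u = 0 := (hker ▸ Submodule.mem_span_singleton_self u :)
  refine Submodule.eq_top_of_disjoint _ _ ?_ ?_
  · have hrank := B.mulVecLin.finrank_range_add_finrank_ker
    rw [hker, finrank_span_singleton hu] at hrank
    rw [finrank_span_singleton hv, ← hrank]
    exact Nat.add_le_add_right B.rank_transpose.ge 1
  · rw [Submodule.disjoint_span_singleton' hv]
    rintro ⟨y, rfl⟩
    exact huv (by rw [mulVecLin_apply, dotProduct_mulVec, vecMul_transpose, hBu, zero_dotProduct])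

variable {n : Type*} [Fintype n] [DecidableEq n] {A P : Matrix n n ℝ} {u v : n → ℝ}

theorem exists_isHermitian_conj_charpoly_mul_eq (hA : A.IsHermitian) (hP : P.PosSemidef) :
    ∃ B : Matrix n n ℝ, LinearMap.ker B.mulVecLin = LinearMap.ker P.mulVecLin ∧
      (B * A * Bᵀ).IsHermitian ∧ (A * P).charpoly = (B * A * Bᵀ).charpoly := by
  obtain ⟨B, rfl⟩ := CStarAlgebra.nonneg_iff_eq_star_mul_self.mp hP.nonneg
  rw [star_eq_conjTranspose, conjTranspose_eq_transpose_of_trivial]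
  refine ⟨B, (ker_mulVecLin_transpose_mul_self B).symm, ?_, ?_⟩
  · simpa using isHermitian_mul_mul_conjTranspose B hA
  · rw [← mul_assoc, charpoly_mul_comm, ← mul_assoc]

theorem splits_charpoly_mul_of_posSemidef (hA : A.IsHermitian) (hP : P.PosSemidef) :
    (A * P).charpoly.Splits := by
  obtain ⟨B, -, hB, hchar⟩ := exists_isHermitian_conj_charpoly_mul_eq hA hP
  exact hchar ▸ hB.splits_charpoly

theorem sigPos_eq_card_roots_charpoly_mul_add_ite (hA : A.IsHermitian) (hP : P.PosSemidef)
    (hker : LinearMap.ker P.mulVecLin = ℝ ∙ u) (hAv : A *ᵥ v = u) (huv : u ⬝ᵥ v ≠ 0) :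
    sigPos A.toQuadraticForm' =
      ((A * P).charpoly.roots.filter (0 < ·)).card + if 0 < u ⬝ᵥ v then 1 else 0 := by
  obtain ⟨B, hkerB, hB, hchar⟩ := exists_isHermitian_conj_charpoly_mul_eq hA hP
  rw [hker] at hkerB
  have hBu : B *ᵥ A *ᵥ v = 0 := hAv ▸ (hkerB ▸ Submodule.mem_span_singleton_self u :)
  rw [sigPos_eq_sigPos_comp_add_ite A.toQuadraticForm'
      (polar_toQuadraticForm'_transpose_mulVecLin (by simpa using hA) hBu)
      (range_transpose_mulVecLin_sup_span_eq_top hkerB huv),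
    toQuadraticForm'_comp_mulVecLin, transpose_transpose, sigPos_eq_card_roots_charpoly hB,
    ← hchar, toQuadraticForm'_apply_eq_dotProduct, hAv, dotProduct_comm]

theorem sigNeg_eq_card_roots_charpoly_mul_add_ite (hA : A.IsHermitian) (hP : P.PosSemidef)
    (hker : LinearMap.ker P.mulVecLin = ℝ ∙ u) (hAv : A *ᵥ v = u) (huv : u ⬝ᵥ v ≠ 0) :
    sigNeg A.toQuadraticForm' =
      ((A * P).charpoly.roots.filter (· < 0)).card + if u ⬝ᵥ v < 0 then 1 else 0 := by
  obtain ⟨B, hkerB, hB, hchar⟩ := exists_isHermitian_conj_charpoly_mul_eq hA hP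
  rw [hker] at hkerB
  have hBu : B *ᵥ A *ᵥ v = 0 := hAv ▸ (hkerB ▸ Submodule.mem_span_singleton_self u :)
  rw [sigNeg_eq_sigNeg_comp_add_ite A.toQuadraticForm'
      (polar_toQuadraticForm'_transpose_mulVecLin (by simpa using hA) hBu)
      (range_transpose_mulVecLin_sup_span_eq_top hkerB huv),
    toQuadraticForm'_comp_mulVecLin, transpose_transpose, sigNeg_eq_card_roots_charpoly hB,
    ← hchar, toQuadraticForm'_apply_eq_dotProduct, hAv, dotProduct_comm]

end ProductInertia

section RealRooted

open Polynomial

theorem im_eq_zero_of_mem_roots_map_s15 {p : ℝ[X]} (hp : p.Splits) {z : ℂ}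
    (hz : z ∈ (p.map (algebraMap ℝ ℂ)).roots) : z.im = 0 := by
  rw [hp.roots_map] at hz
  obtain ⟨x, -, rfl⟩ := Multiset.mem_map.mp hz
  exact Complex.ofReal_im x

theorem count_zero_add_card_filter_neg_add_card_filter_pos {α : Type*} [Zero α] [LinearOrder α]
    (s : Multiset α) :
    s.count 0 + (s.filter (· < 0)).card + (s.filter (0 < ·)).card = s.card := by
  induction s using Multiset.induction_on with
  | empty => simp
  | cons x s ih =>
    simp only [← Multiset.countP_eq_card_filter, Multiset.count_cons, Multiset.countP_cons,
      Multiset.card_cons] at ih ⊢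
    rcases lt_trichotomy x 0 with hx | rfl | hx
    · simp only [hx, hx.ne', hx.not_gt, if_true, if_false]
      lia
    · simp only [lt_irrefl, if_true, if_false]
      lia
    · simp only [hx, hx.ne, hx.not_gt, if_true, if_false]
      lia

theorem rootMultiplicity_zero_add_card_roots {K : Type*} [Field K] [LinearOrder K] {p : K[X]}
    (hp : p.Splits) :
    p.rootMultiplicity 0 + (p.roots.filter (· < 0)).card + (p.roots.filter (0 < ·)).card =
      p.natDegree := by
  rw [← count_roots, count_zero_add_card_filter_neg_add_card_filter_pos, hp.natDegree_eq_card_roots]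

end RealRooted

section DiagonalMul

open Matrix

theorem dotProduct_div_eq_sum {n K : Type*} [Fintype n] [Field K] (u d : n → K) :
    u ⬝ᵥ (u / d) = ∑ i, u i ^ 2 / d i :=
  Finset.sum_congr rfl fun i _ ↦ by rw [Pi.div_apply, ← mul_div_assoc, sq]

theorem diagonal_mulVec_div {n K : Type*} [Fintype n] [DecidableEq n] [Field K] {u d : n → K}
    (hd : ∀ i, d i ≠ 0) : diagonal d *ᵥ (u / d) = u := by
  ext i
  rw [mulVec_diagonal, Pi.div_apply, mul_div_cancel₀ _ (hd i)]

theorem card_filter_neg_add_card_filter_pos {n K : Type*} [Fintype n] [Zero K] [LinearOrder K]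
    {d : n → K} (hd : ∀ i, d i ≠ 0) : (Finset.univ.filter (d · < 0)).card +
      (Finset.univ.filter (0 < d ·)).card = Fintype.card n := by
  simpa only [not_lt, (hd _).symm.le_iff_lt, Finset.card_univ] using
    Finset.card_filter_add_card_filter_not (s := Finset.univ) (d · < 0)

variable {n : Type*} [Fintype n] [DecidableEq n]

theorem sigPos_toQuadraticForm'_diagonal (d : n → ℝ) :
    sigPos (diagonal d).toQuadraticForm' = (Finset.univ.filter (0 < d ·)).card := by
  rw [toQuadraticForm'_diagonal, QuadraticForm.sigPos_weightedSumSquares,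
    Set.ncard_eq_toFinset_card', Set.toFinset_ofPred]

theorem sigNeg_toQuadraticForm'_diagonal (d : n → ℝ) :
    sigNeg (diagonal d).toQuadraticForm' = (Finset.univ.filter (d · < 0)).card := by
  rw [toQuadraticForm'_diagonal, QuadraticForm.sigNeg_weightedSumSquares,
    Set.ncard_eq_toFinset_card', Set.toFinset_ofPred]

variable {d u : n → ℝ} {P : Matrix n n ℝ}

theorem card_pos_roots_charpoly_diagonal_mul_add_ite (hd : ∀ i, d i ≠ 0) (hP : P.PosSemidef)
    (hker : LinearMap.ker P.mulVecLin = ℝ ∙ u) (hs : ∑ i, u i ^ 2 / d i ≠ 0) :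
    ((diagonal d * P).charpoly.roots.filter (0 < ·)).card +
      (if 0 < ∑ i, u i ^ 2 / d i then 1 else 0) = (Finset.univ.filter (0 < d ·)).card := by
  rw [← dotProduct_div_eq_sum] at hs ⊢
  rw [← sigPos_toQuadraticForm'_diagonal, sigPos_eq_card_roots_charpoly_mul_add_ite
    (isHermitian_diagonal d) hP hker (diagonal_mulVec_div hd) hs]

theorem card_neg_roots_charpoly_diagonal_mul_add_ite (hd : ∀ i, d i ≠ 0) (hP : P.PosSemidef)
    (hker : LinearMap.ker P.mulVecLin = ℝ ∙ u) (hs : ∑ i, u i ^ 2 / d i ≠ 0) :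
    ((diagonal d * P).charpoly.roots.filter (· < 0)).card +
      (if ∑ i, u i ^ 2 / d i < 0 then 1 else 0) = (Finset.univ.filter (d · < 0)).card := by
  rw [← dotProduct_div_eq_sum] at hs ⊢
  rw [← sigNeg_toQuadraticForm'_diagonal, sigNeg_eq_card_roots_charpoly_mul_add_ite
    (isHermitian_diagonal d) hP hker (diagonal_mulVec_div hd) hs]

theorem rootMultiplicity_zero_charpoly_diagonal_mul (hd : ∀ i, d i ≠ 0) (hP : P.PosSemidef)
    (hker : LinearMap.ker P.mulVecLin = ℝ ∙ u) (hs : ∑ i, u i ^ 2 / d i ≠ 0) :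
    (diagonal d * P).charpoly.rootMultiplicity 0 = 1 := by
  have hpos := card_pos_roots_charpoly_diagonal_mul_add_ite hd hP hker hs
  have hneg := card_neg_roots_charpoly_diagonal_mul_add_ite hd hP hker hs
  have hroots := rootMultiplicity_zero_add_card_roots
    (splits_charpoly_mul_of_posSemidef (isHermitian_diagonal d) hP)
  rw [charpoly_natDegree_eq_dim] at hroots
  have hcard := card_filter_neg_add_card_filter_pos hd
  rcases hs.lt_or_gt with h | h <;> simp only [h, h.not_gt, if_true, if_false] at hpos hneg <;> lia

end DiagonalMul

section GroundState

open Matrix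

variable {n : Type*} {S : Matrix n n ℝ} {u : n → ℝ}

theorem weight_mul_sq_nonpos (hSu : ∀ i j, i ≠ j → S i j * u i * u j ≤ 0) (x : n → ℝ)
    (i j : n) : S i j * u i * u j * (x i / u i - x j / u j) ^ 2 ≤ 0 := by
  rcases eq_or_ne i j with rfl | hij
  · simp
  · exact mul_nonpos_of_nonpos_of_nonneg (hSu i j hij) (sq_nonneg _)

variable [Fintype n] [DecidableEq n]

/-- The matrix `S − diag((S u)ᵢ / uᵢ)`: the diagonal shift of `S` that annihilates the nowhere
vanishing vector `u`. For `u > 0` this is the ground state representation of a Schrödinger operator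
on a weighted graph. -/
noncomputable def groundStateMatrix (S : Matrix n n ℝ) (u : n → ℝ) : Matrix n n ℝ :=
  S - diagonal (S *ᵥ u / u)

theorem groundStateMatrix_mulVec_self (hu : ∀ i, u i ≠ 0) : groundStateMatrix S u *ᵥ u = 0 := by
  ext i
  simp [groundStateMatrix, sub_mulVec, mulVec_diagonal, div_mul_cancel₀ _ (hu i)]

theorem isHermitian_groundStateMatrix (hS : S.IsHermitian) :
    (groundStateMatrix S u).IsHermitian :=
  hS.sub (isHermitian_diagonal _)

theorem dotProduct_groundStateMatrix_mulVec (hS : S.IsHermitian) (hu : ∀ i, u i ≠ 0)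
    (x : n → ℝ) :
    x ⬝ᵥ groundStateMatrix S u *ᵥ x =
      -(∑ i, ∑ j, S i j * u i * u j * (x i / u i - x j / u j) ^ 2) / 2 := by
  have hterm (i j : n) : S i j * u i * u j * (x i / u i - x j / u j) ^ 2 =
      S i j * u j * (x i ^ 2 / u i) + S j i * u i * (x j ^ 2 / u j) -
        2 * (x i * (S i j * x j)) := by
    have hi := hu i
    have hj := hu j
    rw [← hS.apply i j, star_trivial]
    field_simp
    ring
  have hdiag : ∑ i, ∑ j, S i j * u j * (x i ^ 2 / u i) = x ⬝ᵥ diagonal (S *ᵥ u / u) *ᵥ x := by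
    simp only [dotProduct, mulVec_diagonal, Pi.div_apply]
    simp only [mulVec, dotProduct, Finset.sum_div, Finset.sum_mul, Finset.mul_sum]
    exact Finset.sum_congr rfl fun i _ ↦ Finset.sum_congr rfl fun j _ ↦ by ring
  have hoff : ∑ i, ∑ j, x i * (S i j * x j) = x ⬝ᵥ S *ᵥ x := by
    simp only [dotProduct, mulVec, Finset.mul_sum]
  simp only [hterm, Finset.sum_add_distrib, Finset.sum_sub_distrib, ← Finset.mul_sum _ _ (2 : ℝ)]
  rw [Finset.sum_comm (f := fun i j ↦ S j i * u i * (x j ^ 2 / u j)), hdiag, hoff,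
    groundStateMatrix, sub_mulVec, dotProduct_sub]
  ring

theorem posSemidef_groundStateMatrix (hS : S.IsHermitian) (hu : ∀ i, u i ≠ 0)
    (hSu : ∀ i j, i ≠ j → S i j * u i * u j ≤ 0) : (groundStateMatrix S u).PosSemidef := by
  refine .of_dotProduct_mulVec_nonneg (isHermitian_groundStateMatrix hS) fun x ↦ ?_
  rw [star_trivial, dotProduct_groundStateMatrix_mulVec hS hu]
  have := Finset.sum_nonpos fun i (_ : i ∈ Finset.univ) ↦ Finset.sum_nonpos
    fun j (_ : j ∈ Finset.univ) ↦ weight_mul_sq_nonpos hSu x i j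
  linarith

theorem div_eq_div_of_groundStateMatrix_mulVec_eq_zero (hS : S.IsHermitian) (hu : ∀ i, u i ≠ 0)
    (hSu : ∀ i j, i ≠ j → S i j * u i * u j ≤ 0) {x : n → ℝ}
    (hx : groundStateMatrix S u *ᵥ x = 0) {i j : n} (hij : S i j * u i * u j ≠ 0) :
    x i / u i = x j / u j := by
  have hsum : ∑ i, ∑ j, S i j * u i * u j * (x i / u i - x j / u j) ^ 2 = 0 := by
    have := dotProduct_groundStateMatrix_mulVec hS hu x
    rw [hx, dotProduct_zero] at this
    linarith
  rw [← Finset.sum_product', Finset.sum_eq_zero_iff_of_nonpos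
    fun k _ ↦ weight_mul_sq_nonpos hSu x k.1 k.2] at hsum
  have := hsum (i, j) (Finset.mem_univ _)
  exact sub_eq_zero.mp (pow_eq_zero_iff two_ne_zero |>.mp ((mul_eq_zero_iff_left hij).mp this))

theorem ker_groundStateMatrix_mulVecLin (hS : S.IsHermitian) (hu : ∀ i, u i ≠ 0)
    (hSu : ∀ i j, i ≠ j → S i j * u i * u j ≤ 0) {G : SimpleGraph n} (hG : G.Preconnected)
    (hGS : ∀ i j, G.Adj i j → S i j ≠ 0) :
    LinearMap.ker (groundStateMatrix S u).mulVecLin = ℝ ∙ u := by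
  refine le_antisymm (fun x hx ↦ ?_) ?_
  · have hconst (i j : n) : x i / u i = x j / u j := by
      obtain ⟨w⟩ := hG i j
      induction w with
      | nil => rfl
      | cons h _ ih =>
        exact (div_eq_div_of_groundStateMatrix_mulVec_eq_zero hS hu hSu hx
          (mul_ne_zero (mul_ne_zero (hGS _ _ h) (hu _)) (hu _))).trans ih
    rw [Submodule.mem_span_singleton]
    rcases isEmpty_or_nonempty n with _ | ⟨⟨i⟩⟩
    · exact ⟨0, Subsingleton.elim _ _⟩
    · exact ⟨x i / u i, funext fun j ↦ by simp [hconst i j, hu j]⟩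
  · rw [Submodule.span_singleton_le_iff_mem]
    exact groundStateMatrix_mulVec_self hu

end GroundState

section Path

open Matrix SimpleGraph

variable {N : ℕ}

theorem extZ_eq_sum (u : Fin N → ℝ) (k : ℤ) :
    extZ N u k = ∑ j : Fin N, if ((j : ℕ) : ℤ) = k then u j else 0 := by
  by_cases h : 0 ≤ k ∧ k < N
  · rw [extZ, dif_pos h, Finset.sum_eq_single ⟨k.toNat, by lia⟩]
    · simp [h.1]
    · exact fun j _ hj ↦ if_neg fun hjk ↦ hj (Fin.ext (by simp [← hjk]))
    · simp
  · rw [extZ, dif_neg h, Finset.sum_eq_zero fun j _ ↦ if_neg (by have := j.isLt; lia)]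

theorem mul_neg_of_pathGraph_adj {u : Fin N → ℝ}
    (halt : ∀ i : ℕ, (h : i + 1 < N) → u ⟨i, Nat.lt_of_succ_lt h⟩ * u ⟨i + 1, h⟩ < 0)
    {i j : Fin N} (hij : (pathGraph N).Adj i j) : u i * u j < 0 := by
  rcases pathGraph_adj.mp hij with h | h
  · simpa only [h] using halt i (h ▸ j.isLt)
  · rw [mul_comm]
    simpa only [h] using halt j (h ▸ i.isLt)

variable [DecidableRel (pathGraph N).Adj]

theorem pathGraph_adjMatrix_mulVec (u : Fin N → ℝ) (i : Fin N) :
    ((pathGraph N).adjMatrix ℝ *ᵥ u) i =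
      extZ N u (((i : ℕ) : ℤ) - 1) + extZ N u (((i : ℕ) : ℤ) + 1) := by
  rw [extZ_eq_sum, extZ_eq_sum, ← Finset.sum_add_distrib, mulVec, dotProduct]
  refine Finset.sum_congr rfl fun j _ ↦ ?_
  simp only [adjMatrix_apply, pathGraph_adj]
  split_ifs <;> first | lia | simp

theorem Lminus_eq_neg_groundStateMatrix (u : Fin N → ℝ) :
    Lminus N u = -groundStateMatrix ((pathGraph N).adjMatrix ℝ) u := by
  ext i j
  simp only [Matrix.neg_apply, groundStateMatrix, Matrix.sub_apply, adjMatrix_apply,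
    pathGraph_adj]
  rcases eq_or_ne i j with rfl | hij
  · simp only [Lminus, if_true, diagonal_apply_eq, Pi.div_apply, pathGraph_adjMatrix_mulVec]
    simp
  · have := Fin.val_ne_of_ne hij
    simp only [Lminus, if_neg hij, diagonal_apply_ne _ hij]
    split_ifs <;> first | lia | simp

end Path

section Reaction

/-- The derivative `f'(u) = 1 − p u^{p−1} + γ q u^{q−1}` of the nonlinearity
`f(u) = u − u^p + γ u^q`, whose nonzero roots are the roots of `g`. -/
def reactionDeriv (p q : ℕ) (γ u : ℝ) : ℝ :=
  1 - (p : ℝ) * u ^ (p - 1) + γ * (q : ℝ) * u ^ (q - 1)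

theorem mul_pow_sub_one_lt_mul_pow_sub_one {m n : ℕ} (hm : 0 < m) (hmn : m < n) {r : ℝ}
    (hr : 0 < r) (hr1 : r ≠ 1) : (n : ℝ) * (r ^ m - 1) < m * (r ^ n - 1) := by
  have hm0 : (0 : ℝ) < m := Nat.cast_pos.mpr hm
  have hpow : (1 + (r ^ m - 1)) ^ ((n : ℝ) / m) = r ^ n := by
    rw [add_sub_cancel, ← Real.rpow_natCast r m, ← Real.rpow_mul hr.le,
      mul_div_cancel₀ _ hm0.ne', Real.rpow_natCast]
  have hbern := one_add_mul_self_lt_rpow_one_add (s := r ^ m - 1) (p := (n : ℝ) / m)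
    (by linarith [pow_pos hr m])
    (sub_ne_zero.mpr fun h ↦ hr1 ((pow_eq_one_iff_of_nonneg hr.le hm.ne').mp h))
    ((one_lt_div hm0).mpr (Nat.cast_lt.mpr hmn))
  rw [hpow] at hbern
  calc (n : ℝ) * (r ^ m - 1) = m * (n / m * (r ^ m - 1)) := by field_simp
    _ < m * (r ^ n - 1) := mul_lt_mul_of_pos_left (by linarith) hm0

theorem mul_pow_mul_pow_sub_pow_lt {m n : ℕ} (hm : 0 < m) (hmn : m < n) {x y : ℝ}
    (hx : 0 < x) (hy : 0 < y) (hxy : x ≠ y) :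
    n * x ^ n * (y ^ m - x ^ m) < m * x ^ m * (y ^ n - x ^ n) := by
  have h := mul_pow_sub_one_lt_mul_pow_sub_one hm hmn (div_pos hy hx)
    fun h ↦ hxy ((div_eq_one_iff_eq hx.ne').mp h).symm
  have := mul_lt_mul_of_pos_left h (mul_pos (pow_pos hx m) (pow_pos hx n))
  rw [div_pow, div_pow] at this
  field_simp at this
  linarith

variable {p q : ℕ} {γ : ℝ}

theorem reactionDeriv_mul_pow_sub_pow_pos (hp : 2 ≤ p) (hpq : p < q) (hγ : 0 < γ) {x y : ℝ}
    (hx : 0 < x) (hy : 0 < y) (hxy : x ≠ y) (hgx : 1 - x ^ (p - 1) + γ * x ^ (q - 1) = 0)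
    (hgy : 1 - y ^ (p - 1) + γ * y ^ (q - 1) = 0) :
    0 < reactionDeriv p q γ x * (x ^ (p - 1) - y ^ (p - 1)) := by
  obtain ⟨m, rfl⟩ : ∃ m, p = m + 1 := ⟨p - 1, by lia⟩
  obtain ⟨n, rfl⟩ : ∃ n, q = n + 1 := ⟨q - 1, by lia⟩
  simp only [Nat.add_sub_cancel, reactionDeriv, Nat.cast_add, Nat.cast_one] at hgx hgy ⊢
  have hderiv : 1 - ((m : ℝ) + 1) * x ^ m + γ * (n + 1) * x ^ n =
      n * (γ * x ^ n) - m * x ^ m := by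
    linear_combination hgx
  have hdiff : γ * (y ^ n - x ^ n) = y ^ m - x ^ m := by linear_combination hgy - hgx
  have hbern : n * (γ * x ^ n) * (y ^ m - x ^ m) < m * x ^ m * (y ^ m - x ^ m) := by
    calc n * (γ * x ^ n) * (y ^ m - x ^ m) = γ * (n * x ^ n * (y ^ m - x ^ m)) := by ring
      _ < γ * (m * x ^ m * (y ^ n - x ^ n)) :=
        mul_lt_mul_of_pos_left (mul_pow_mul_pow_sub_pow_lt (by lia) (by lia) hx hy hxy) hγ
      _ = m * x ^ m * (y ^ m - x ^ m) := by rw [← hdiff]; ring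
  rw [hderiv]
  linarith

theorem reactionDeriv_neg_and_pos (hp : 2 ≤ p) (hpq : p < q) (hγ : 0 < γ) {a A : ℝ}
    (ha : 0 < a) (haA : a < A) (hga : 1 - a ^ (p - 1) + γ * a ^ (q - 1) = 0)
    (hgA : 1 - A ^ (p - 1) + γ * A ^ (q - 1) = 0) :
    reactionDeriv p q γ a < 0 ∧ 0 < reactionDeriv p q γ A := by
  have hpow : a ^ (p - 1) < A ^ (p - 1) := pow_lt_pow_left₀ haA ha.le (by lia)
  exact ⟨neg_of_mul_pos_left
      (reactionDeriv_mul_pow_sub_pow_pos hp hpq hγ ha (ha.trans haA) haA.ne hga hgA)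
      (sub_neg.mpr hpow).le,
    pos_of_mul_pos_left
      (reactionDeriv_mul_pow_sub_pow_pos hp hpq hγ (ha.trans haA) ha haA.ne' hgA hga)
      (sub_pos.mpr hpow).le⟩

end Reaction

section TwoValued

variable {ι : Type*} [Fintype ι] {u : ι → ℝ} {a b : ℝ}

theorem sum_sq_div_comp_abs (hu : ∀ i, |u i| = a ∨ |u i| = b) (φ : ℝ → ℝ) :
    ∑ i, u i ^ 2 / φ |u i| = (Finset.univ.filter fun i ↦ |u i| = a).card * a ^ 2 / φ a +
      (Fintype.card ι - (Finset.univ.filter fun i ↦ |u i| = a).card) * b ^ 2 / φ b := by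
  have hterm (i : ι) : u i ^ 2 / φ |u i| = if |u i| = a then a ^ 2 / φ a else b ^ 2 / φ b := by
    rw [← sq_abs]
    grind
  have hcard := Finset.card_filter_add_card_filter_not (s := Finset.univ) fun i ↦ |u i| = a
  rw [Finset.sum_congr rfl fun i _ ↦ hterm i, Finset.sum_ite, Finset.sum_const, Finset.sum_const,
    nsmul_eq_mul, nsmul_eq_mul, ← Finset.card_univ, ← hcard, Nat.cast_add]
  ring

theorem filter_comp_abs_neg (hu : ∀ i, |u i| = a ∨ |u i| = b) {φ : ℝ → ℝ} (ha : φ a < 0)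
    (hb : 0 < φ b) : (Finset.univ.filter fun i ↦ φ |u i| < 0) =
      Finset.univ.filter fun i ↦ |u i| = a :=
  Finset.filter_congr fun i _ ↦ by grind

end TwoValued

section Alternating

open Matrix

theorem posSemidef_and_ker_neg_Lminus {N : ℕ} {ut : Fin N → ℝ} (hut : ∀ n, ut n ≠ 0)
    (halt : ∀ i : ℕ, (h : i + 1 < N) → ut ⟨i, Nat.lt_of_succ_lt h⟩ * ut ⟨i + 1, h⟩ < 0) :
    (-Lminus N ut).PosSemidef ∧ LinearMap.ker (-Lminus N ut).mulVecLin = ℝ ∙ ut := by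
  classical
  let S := (SimpleGraph.pathGraph N).adjMatrix ℝ
  have hS : S.IsHermitian := by simp [S, IsHermitian]
  have hSu (i j : Fin N) (_ : i ≠ j) : S i j * ut i * ut j ≤ 0 := by
    by_cases hij : (SimpleGraph.pathGraph N).Adj i j
    · simpa [S, hij] using (mul_neg_of_pathGraph_adj halt hij).le
    · simp [S, hij]
  rw [Lminus_eq_neg_groundStateMatrix, neg_neg]
  exact ⟨posSemidef_groundStateMatrix hS hut hSu, ker_groundStateMatrix_mulVecLin hS hut hSu
    (SimpleGraph.pathGraph_preconnected N) fun i j hij ↦ by simp [hij]⟩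

theorem LplusLminus_spectrum_alternating_mixed_general {N : ℕ} {d ut : Fin N → ℝ}
    (hd : ∀ n, d n ≠ 0) (hut : ∀ n, ut n ≠ 0)
    (halt : ∀ i : ℕ, (h : i + 1 < N) → ut ⟨i, Nat.lt_of_succ_lt h⟩ * ut ⟨i + 1, h⟩ < 0)
    {K : ℕ} (hK : K = (Finset.univ.filter (fun n => d n < 0)).card)
    {s : ℝ} (hs : s = ∑ n, ut n ^ 2 / d n) (hs0 : s ≠ 0)
    {σ : ℕ} (hσ : σ = if s < 0 then 1 else 0) :
    (∀ z ∈ ((diagonal d * Lminus N ut).charpoly.map (algebraMap ℝ ℂ)).roots, z.im = 0) ∧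
    (diagonal d * Lminus N ut).charpoly.rootMultiplicity 0 = 1 ∧
    ((diagonal d * Lminus N ut).charpoly.roots.filter (fun x => x < 0)).card =
      N - K - (1 - σ) ∧
    ((diagonal d * Lminus N ut).charpoly.roots.filter (fun x => 0 < x)).card = K - σ := by
  obtain ⟨hP, hker⟩ := posSemidef_and_ker_neg_Lminus hut halt
  have hprod : diagonal d * Lminus N ut = diagonal (-d) * -Lminus N ut := by
    rw [← neg_mul_neg, diagonal_neg, Pi.neg_def]
  have hnd (n : Fin N) : (-d) n ≠ 0 := neg_ne_zero.mpr (hd n)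
  have hns : ∑ n, ut n ^ 2 / (-d) n = -s := by
    simp only [hs, Pi.neg_apply, div_neg, Finset.sum_neg_distrib]
  have hns0 : ∑ n, ut n ^ 2 / (-d) n ≠ 0 := hns ▸ neg_ne_zero.mpr hs0
  have hpos := card_pos_roots_charpoly_diagonal_mul_add_ite hnd hP hker hns0
  have hneg := card_neg_roots_charpoly_diagonal_mul_add_ite hnd hP hker hns0
  have hcard := card_filter_neg_add_card_filter_pos hd
  rw [Fintype.card_fin, ← hK] at hcard
  rw [hns, ← hprod] at hpos hneg
  simp only [Pi.neg_apply, neg_pos, neg_neg_iff_pos, ← hK] at hpos hneg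
  refine ⟨fun z hz ↦ im_eq_zero_of_mem_roots_map_s15 ?_ hz, ?_, ?_⟩
  · exact hprod ▸ splits_charpoly_mul_of_posSemidef (isHermitian_diagonal (-d)) hP
  · exact hprod ▸ rootMultiplicity_zero_charpoly_diagonal_mul hnd hP hker hns0
  · rcases hs0.lt_or_gt with h | h <;>
      simp only [h, h.not_gt, if_true, if_false] at hpos hneg hσ <;> lia

end Alternating

/-- For a sign-alternating code with `|ũ_n| ∈ {a, A}` and `K` entries of modulus `a`,
assuming the quantity `s = K a²/f'(a) + (N−K) A²/f'(A)` is nonzero, with `σ₀ = 1` if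
`s < 0` and `σ₀ = 0` if `s > 0`: all roots of the characteristic polynomial of
`L̃⁺L̃⁻` are real; `0` is a simple root; exactly `N − K − (1 − σ₀)` roots are negative
and exactly `K − σ₀` roots are positive, counted with multiplicity. -/
theorem LplusLminus_spectrum_alternating_mixed (p q : ℕ) (hp : 2 ≤ p) (hpq : p < q)
    (γ : ℝ) (hγ0 : 0 < γ) (hγ : γ < gammaCrit p q)
    (a A : ℝ) (ha : 0 < a) (haA : a < A)
    (hroota : 1 - a ^ (p - 1) + γ * a ^ (q - 1) = 0)
    (hrootA : 1 - A ^ (p - 1) + γ * A ^ (q - 1) = 0)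
    (N : ℕ) (hN : 1 ≤ N) (ut : Fin N → ℝ)
    (hut : ∀ n, |ut n| = a ∨ |ut n| = A)
    (halt : ∀ i : ℕ, (h : i + 1 < N) →
      ut ⟨i, Nat.lt_of_succ_lt h⟩ * ut ⟨i + 1, h⟩ < 0)
    (K : ℕ) (hK : K = (Finset.univ.filter (fun n => |ut n| = a)).card)
    (s : ℝ)
    (hs : s = (K : ℝ) * a ^ 2 / (1 - (p : ℝ) * a ^ (p - 1) + γ * (q : ℝ) * a ^ (q - 1))
        + ((N : ℝ) - (K : ℝ)) * A ^ 2
            / (1 - (p : ℝ) * A ^ (p - 1) + γ * (q : ℝ) * A ^ (q - 1)))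
    (hs0 : s ≠ 0)
    (σ : ℕ) (hσ : σ = if s < 0 then 1 else 0) :
    (∀ z ∈ ((Lplus N p q γ ut * Lminus N ut).charpoly.map (algebraMap ℝ ℂ)).roots,
      z.im = 0) ∧
    (Lplus N p q γ ut * Lminus N ut).charpoly.rootMultiplicity 0 = 1 ∧
    (((Lplus N p q γ ut * Lminus N ut).charpoly.roots.filter (fun x => x < 0)).card
      = N - K - (1 - σ)) ∧
    (((Lplus N p q γ ut * Lminus N ut).charpoly.roots.filter (fun x => 0 < x)).card
      = K - σ) := by
  obtain ⟨hφa, hφA⟩ := reactionDeriv_neg_and_pos hp hpq hγ0 ha haA hroota hrootA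
  have hd (n : Fin N) : reactionDeriv p q γ |ut n| ≠ 0 := by
    rcases hut n with h | h <;> rw [h]
    exacts [hφa.ne, hφA.ne']
  have hut0 (n : Fin N) : ut n ≠ 0 := by
    rw [← abs_pos]
    rcases hut n with h | h <;> rw [h]
    exacts [ha, ha.trans haA]
  refine LplusLminus_spectrum_alternating_mixed_general hd hut0 halt ?_ ?_ hs0 hσ
  · rw [hK, filter_comp_abs_neg hut hφa hφA]
  · rw [hs, sum_sq_div_comp_abs hut, ← hK, Fintype.card_fin]
    rfl
end
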